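/- arXiv:0812.4897 — 2 statements merged into one kernel-verified Lean document; each statement's English description precedes it below -/
import Mathlib

section
/- The identity map on M/∂^M M together with the maps induced by ψ^k (k ≥ 1) define an embedding of cohomology complexes Γ^•(A,M) ↪ C̄^•(A,M), i.e., the induced injective maps intertwine the differential δ on Γ^• with the differential d on C̄^• (ψ^1 ∘ δ = d on M/∂^M M, and ψ^{k+1} ∘ δ = d ∘ ψ^k on Γ^k). If moreover A decomposes, as an 𝔽[∂]-module, into a direct sum of its torsion and a free submodule, this embedding is an isomorphism of complexes Γ^•(A,M) ≅ C̄^•(A,M). -/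
namespace LCC

/-! ### Index utilities -/

/-- Skip one index: the increasing enumeration of `{0,…,k} \ {i}`. -/
def skip1 (i r : ℕ) : ℕ := if r < i then r else r + 1

/-- Skip two indices `i < j`: the increasing enumeration of `{0,…,k+1} \ {i,j}`. -/
def skip2 (i j r : ℕ) : ℕ := if r < i then r else if r + 1 < j then r + 1 else r + 2

/-- Remove the `i`-th entry of a tuple. -/
def rm1 {α : Type*} {k : ℕ} (i : ℕ) (a : Fin (k+1) → α) : Fin k → α :=
  fun r => a ⟨skip1 i r.1, by have := r.2; unfold skip1; split <;> omega⟩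

/-- Remove the `i`-th and `j`-th entries (for `i < j`) of a tuple. -/
def rm2 {α : Type*} {k : ℕ} (i j : ℕ) (a : Fin (k+2) → α) : Fin k → α :=
  fun r => a ⟨skip2 i j r.1, by
    have := r.2; unfold skip2; split
    · omega
    · split <;> omega⟩

/-- Total weight of a multi-index. -/
def wt {k : ℕ} (ν : Fin k → ℕ) : ℕ := ∑ r, ν r

/-- The multinomial coefficient `(|m| + s)! / (∏ mᵣ! · s!)`. -/
def mnom {K : ℕ} (m : Fin K → ℕ) (s : ℕ) : ℕ :=
  (wt m + s).factorial / ((∏ r, (m r).factorial) * s.factorial)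

variable (F : Type*) [Field F]

/-- A Lie conformal algebra over `F`: an `F[∂]`-module `A` (given by the linear
endomorphism `D`), together with a `λ`-bracket recorded through its coefficients:
`[a_λ b] = ∑ₙ (br a b n) λⁿ`, satisfying sesquilinearity, skew-symmetry and the
Jacobi identity (all written in terms of coefficients of the `λ`-expansions). -/
structure LCA (A : Type*) [AddCommGroup A] [Module F A] where
  D : A →ₗ[F] A
  br : A →ₗ[F] A →ₗ[F] (ℕ → A)
  br_fin : ∀ a b, (Function.support (br a b)).Finite
  sesq_left_zero : ∀ a b, br (D a) b 0 = 0
  sesq_left : ∀ a b n, br (D a) b (n+1) = - br a b n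
  sesq_right : ∀ a b n, br a (D b) n
      = D (br a b n) + (if n = 0 then 0 else br a b (n-1))
  skew : ∀ a b m, br a b m
      = - ∑ᶠ n, ((-1 : F)^n * (n.choose m : F)) • ((D ^ (n - m)) (br b a n))
  jacobi : ∀ a b c m n,
      br a (br b c n) m - br b (br a c m) n
        = ∑ j ∈ Finset.range (m+1), (((n+j).choose j : F)) • br (br a b (m-j)) c (n+j)

/-- A module over a Lie conformal algebra: an `F[∂]`-module `M` with a `λ`-action
of `A`, given through the coefficients `a_λ v = ∑ₙ (act a v n) λⁿ`, satisfying
sesquilinearity and the Jacobi identity. -/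
structure LCAMod {A : Type*} [AddCommGroup A] [Module F A] (L : LCA F A)
    (M : Type*) [AddCommGroup M] [Module F M] where
  D : M →ₗ[F] M
  act : A →ₗ[F] M →ₗ[F] (ℕ → M)
  act_fin : ∀ a m, (Function.support (act a m)).Finite
  sesq_left_zero : ∀ a m, act (L.D a) m 0 = 0
  sesq_left : ∀ a m n, act (L.D a) m (n+1) = - act a m n
  sesq_right : ∀ a m n, act a (D m) n
      = D (act a m n) + (if n = 0 then 0 else act a m (n-1))
  jacobi : ∀ a b v p q,
      act a (act b v q) p - act b (act a v p) q
        = ∑ j ∈ Finset.range (p+1), (((q+j).choose j : F)) • act (L.br a b (p-j)) v (q+j)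

variable {F}
variable {A M : Type*} [AddCommGroup A] [Module F A] [AddCommGroup M] [Module F M]

/-- Torsion elements of the `F[∂]`-module `A`. -/
def IsTor (L : LCA F A) (x : A) : Prop :=
  ∃ p : Polynomial F, p ≠ 0 ∧ Polynomial.aeval L.D p x = 0

/-- `A` decomposes, as an `F[∂]`-module, into the direct sum of its torsion and
a free complementary submodule `F[∂] ⊗ U`. -/
def Decomposes (L : LCA F A) : Prop :=
  ∃ U : Submodule F A, Function.Bijective
    (fun p : {x : A // IsTor L x} × (ℕ →₀ U) =>
      (p.1 : A) + p.2.sum (fun n u => (L.D ^ n) (u : A)))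

variable {L : LCA F A}

/-- The condition for a coefficient family
`γ : A^{⊗ k} → F[λ₁,…,λ_k] ⊗ M` (recorded via the coefficients
`γ a ν` of `λ^ν`) to be a basic `k`-cochain: `F`-multilinearity, polynomiality,
sesquilinearity (A1) and skew-symmetry (A2). -/
structure IsGamma (R : LCAMod F L M) (k : ℕ)
    (γ : (Fin k → A) → (Fin k → ℕ) → M) : Prop where
  map_add : ∀ (a : Fin k → A) (i : Fin k) (x y : A),
    γ (Function.update a i (x + y)) = γ (Function.update a i x) + γ (Function.update a i y)
  map_smul : ∀ (a : Fin k → A) (i : Fin k) (r : F) (x : A),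
    γ (Function.update a i (r • x)) = r • γ (Function.update a i x)
  fin : ∀ a, (Function.support (γ a)).Finite
  sesq : ∀ (a : Fin k → A) (i : Fin k) (x : A) (ν : Fin k → ℕ),
    γ (Function.update a i (L.D x)) ν
      = (if ν i = 0 then 0 else - γ (Function.update a i x) (Function.update ν i (ν i - 1)))
  skew : ∀ (a : Fin k → A) (ν : Fin k → ℕ) (σ : Equiv.Perm (Fin k)),
    γ (a ∘ σ) (ν ∘ σ) = ((Equiv.Perm.sign σ : ℤˣ) : ℤ) • γ a ν

/-- The action of `∂` on basic cochains: `(∂γ) = (∂^M + λ₁ + ⋯ + λ_k) ∘ γ`,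
in terms of coefficients. -/
def GammaD (R : LCAMod F L M) {k : ℕ} (γ : (Fin k → A) → (Fin k → ℕ) → M) :
    (Fin k → A) → (Fin k → ℕ) → M :=
  fun a ν => R.D (γ a ν)
    + ∑ i : Fin k, (if ν i = 0 then 0 else γ a (Function.update ν i (ν i - 1)))

/-- Substitution of the auxiliary variable `μ` by
`λ† = −λ₁ − ⋯ − λ_K − ∂^M` (with `∂^M` moved to the left) in a polynomial
`q` in `λ₁,…,λ_K, μ`, recorded through its coefficients `q ρ n` of `λ^ρ μ^n`.
The result is the coefficient of `λ^ν`. -/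
noncomputable def substDag {K : ℕ} (DM : M →ₗ[F] M)
    (q : (Fin K → ℕ) → ℕ → M) (ν : Fin K → ℕ) : M :=
  ∑ ρ ∈ Finset.Iic ν, ∑ᶠ s : ℕ,
    (((-1 : F)^(wt (fun r => ν r - ρ r) + s)) * (mnom (fun r => ν r - ρ r) s : F)) •
      ((DM ^ s) (q ρ (wt (fun r => ν r - ρ r) + s)))

/-- The condition for a coefficient family
`c : A^{⊗(k+1)} → F[λ₁,…,λ_k] ⊗ M` to be a `(k+1)`-`λ`-bracket
(an element of `C^{k+1}(A,M)`), i.e. conditions B1, B2, B3 of the paper,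
written in terms of the coefficients `c a ν` of `λ^ν`. -/
structure IsCBr (R : LCAMod F L M) (k : ℕ)
    (c : (Fin (k+1) → A) → (Fin k → ℕ) → M) : Prop where
  map_add : ∀ (a : Fin (k+1) → A) (i : Fin (k+1)) (x y : A),
    c (Function.update a i (x + y)) = c (Function.update a i x) + c (Function.update a i y)
  map_smul : ∀ (a : Fin (k+1) → A) (i : Fin (k+1)) (r : F) (x : A),
    c (Function.update a i (r • x)) = r • c (Function.update a i x)
  fin : ∀ a, (Function.support (c a)).Finite
  sesq₁ : ∀ (a : Fin (k+1) → A) (i : Fin k) (x : A) (ν : Fin k → ℕ),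
    c (Function.update a i.castSucc (L.D x)) ν
      = (if ν i = 0 then 0
         else - c (Function.update a i.castSucc x) (Function.update ν i (ν i - 1)))
  sesq₂ : ∀ (a : Fin (k+1) → A) (x : A) (ν : Fin k → ℕ),
    c (Function.update a (Fin.last k) (L.D x)) ν
      = R.D (c (Function.update a (Fin.last k) x) ν)
        + ∑ i : Fin k, (if ν i = 0 then 0
            else c (Function.update a (Fin.last k) x) (Function.update ν i (ν i - 1)))
  skew : ∀ (a : Fin (k+1) → A) (ν : Fin k → ℕ) (σ : Equiv.Perm (Fin (k+1))),
    c a ν = ((Equiv.Perm.sign σ : ℤˣ) : ℤ) • substDag R.D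
      (fun ρ n =>
        if (Fin.snoc ρ n : Fin (k+1) → ℕ) (σ (Fin.last k)) = 0 then
          c (a ∘ σ) (fun i : Fin k => (Fin.snoc ρ n : Fin (k+1) → ℕ) (σ i.castSucc))
        else 0) ν

/-- The subspace `C̄`: poly-`λ`-brackets vanishing whenever one of the arguments is
a torsion element of `A`. -/
def VanishOnTorsion (L : LCA F A) {k : ℕ}
    (c : (Fin (k+1) → A) → (Fin k → ℕ) → M) : Prop :=
  ∀ a ν, (∃ i, IsTor L (a i)) → c a ν = 0

/-- The differential `d : C⁰ = M/∂M → C¹`, `(d∫m)(a) = a_{−∂^M} m`. -/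
noncomputable def dZero (R : LCAMod F L M) (m : M) :
    (Fin 1 → A) → (Fin 0 → ℕ) → M :=
  fun a _ => ∑ᶠ n, ((-1 : F)^n) • ((R.D ^ n) (R.act (a 0) m n))

/-- The second term of the differential `d` of the complex of
poly-`λ`-brackets (the double sum over `i < j` in the paper's formula). -/
noncomputable def dPair (L : LCA F A) (R : LCAMod F L M) :
    ∀ {k : ℕ}, ((Fin (k+1) → A) → (Fin k → ℕ) → M) →
      (Fin (k+2) → A) → (Fin (k+1) → ℕ) → M
  | 0, _, _, _ => 0
  | (s+1), c, a, ν =>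
    ∑ i : Fin (s+2), ∑ j : Fin (s+2),
      if i < j then
        ((-1 : F)^(s + i.1 + j.1 + 1)) •
          ∑ p ∈ Finset.range (ν i + 1),
            substDag R.D
              (fun ρ n =>
                if ρ i = 0 ∧ ρ j = 0 then
                  c (Fin.snoc (Fin.snoc (rm2 i.1 j.1 (Fin.init a)) (a (Fin.last (s+2))))
                      (L.br (a i.castSucc) (a j.castSucc) p))
                    (Fin.snoc (rm2 i.1 j.1 ρ) n)
                else 0)
              (Function.update ν i (ν i - p))
      else 0

/-- The differential `d` on the complex `C^•(A,M)` of poly-`λ`-brackets,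
written in terms of coefficients (formula (1.8) of the paper). Here `c` is a
`(k+1)`-`λ`-bracket and `dRaw c` is a `(k+2)`-`λ`-bracket. -/
noncomputable def dRaw (L : LCA F A) (R : LCAMod F L M) {k : ℕ}
    (c : (Fin (k+1) → A) → (Fin k → ℕ) → M) :
    (Fin (k+2) → A) → (Fin (k+1) → ℕ) → M :=
  fun a ν =>
    (∑ i : Fin (k+1), ((-1 : F)^i.1) •
        R.act (a i.castSucc) (c (rm1 i.1 a) (rm1 i.1 ν)) (ν i))
    + dPair L R c a ν
    + ((-1 : F)^(k+1)) • substDag R.D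
        (fun ρ n =>
          if ρ (Fin.last k) = 0 then
            R.act (a (Fin.last (k+1))) (c (Fin.init a) (Fin.init ρ)) n
          else 0) ν
    + ∑ i : Fin (k+1), ((-1 : F)^(i.1+1)) •
        c (Fin.snoc (rm1 i.1 (Fin.init a)) (L.br (a i.castSucc) (a (Fin.last (k+1))) (ν i)))
          (rm1 i.1 ν)

/-- The second term of the differential `δ` of the basic complex
`Γ̃^•(A,M)` (the double sum over `i < j`). -/
noncomputable def deltaPair (L : LCA F A) (R : LCAMod F L M) :
    ∀ {k : ℕ}, ((Fin k → A) → (Fin k → ℕ) → M) →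
      (Fin (k+1) → A) → (Fin (k+1) → ℕ) → M
  | 0, _, _, _ => 0
  | (s+1), γ, a, ν =>
    ∑ i : Fin (s+2), ∑ j : Fin (s+2),
      if i < j then
        ((-1 : F)^(s + i.1 + j.1)) •
          ∑ p ∈ Finset.range (ν i + 1),
            ((((ν i - p) + ν j).choose (ν i - p) : F)) •
              γ (Fin.snoc (rm2 i.1 j.1 a) (L.br (a i) (a j) p))
                (Fin.snoc (rm2 i.1 j.1 ν) ((ν i - p) + ν j))
      else 0

/-- The differential `δ` of the basic Lie conformal algebra cohomology complex
`Γ̃^•(A,M)`, written in terms of coefficients of the `λ`-expansions. -/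
noncomputable def deltaRaw (L : LCA F A) (R : LCAMod F L M) {k : ℕ}
    (γ : (Fin k → A) → (Fin k → ℕ) → M) :
    (Fin (k+1) → A) → (Fin (k+1) → ℕ) → M :=
  fun a ν =>
    (∑ i : Fin (k+1), ((-1 : F)^i.1) •
        R.act (a i) (γ (rm1 i.1 a) (rm1 i.1 ν)) (ν i))
    + deltaPair L R γ a ν

/-- The map `ψ^{k+1} : Γ̃^{k+1}(A,M) → C^{k+1}(A,M)`,
`{a₁ λ₁ ⋯ a_k λ_k a_{k+1}}_{ψ(γ)} = γ_{λ₁,…,λ_k,λ†}(a₁,…,a_{k+1})`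
where `λ† = −λ₁ − ⋯ − λ_k − ∂^M` (with `∂^M` moved to the left). -/
noncomputable def psiRaw (R : LCAMod F L M) {k : ℕ}
    (γ : (Fin (k+1) → A) → (Fin (k+1) → ℕ) → M) :
    (Fin (k+1) → A) → (Fin k → ℕ) → M :=
  fun a ν => substDag R.D (fun ρ n => γ a (Fin.snoc ρ n)) ν

/-- The map `χ` on "polynomial duals": given
`φ : Hom(F[λ₁,…,λ_K], M)` (recorded through its values `φ ν` on monomials),
`chiMap DM φ` is `φ ∘ (substitution λ_{K+1} ↦ −λ₁ − ⋯ − λ_K + ∂^M)`,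
with `∂^M` moved to the left. -/
noncomputable def chiMap {K : ℕ} (DM : M →ₗ[F] M) (φ : (Fin K → ℕ) → M) :
    (Fin (K+1) → ℕ) → M :=
  fun ν =>
    ∑ m ∈ Finset.Iic (fun _ : Fin K => ν (Fin.last K)),
      if wt m ≤ ν (Fin.last K) then
        (((-1 : F)^(wt m)) * (mnom m (ν (Fin.last K) - wt m) : F)) •
          ((DM ^ (ν (Fin.last K) - wt m)) (φ (fun r => Fin.init ν r + m r)))
      else 0

section Product

variable (F) {N : Type*} [CommRing N] [Algebra F N]

/-- The exterior multiplication of basic cochains, in coefficient form. -/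
noncomputable def wedge {h k : ℕ}
    (α : (Fin h → A) → (Fin h → ℕ) → N) (β : (Fin k → A) → (Fin k → ℕ) → N) :
    (Fin (h+k) → A) → (Fin (h+k) → ℕ) → N :=
  fun a ν =>
    ((h.factorial * k.factorial : F))⁻¹ •
      ∑ σ : Equiv.Perm (Fin (h+k)),
        ((Equiv.Perm.sign σ : ℤˣ) : ℤ) •
          (α (fun i => a (σ (Fin.castAdd k i))) (fun i => ν (σ (Fin.castAdd k i))) *
           β (fun i => a (σ (Fin.natAdd h i))) (fun i => ν (σ (Fin.natAdd h i))))

/-- Contraction of a basic cochain by (a generator of) a basic `h`-chain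
`b ⊗ φ ∈ A^{⊗h} ⊗ Hom(F[λ₁,…,λ_h], N)`. -/
noncomputable def iotaG {h k : ℕ} (b : Fin h → A) (φ : (Fin h → ℕ) → N)
    (γ : (Fin (h + k) → A) → (Fin (h + k) → ℕ) → N) :
    (Fin k → A) → (Fin k → ℕ) → N :=
  fun a ν => ∑ᶠ ρ : Fin h → ℕ, φ ρ * γ (Fin.append b a) (Fin.append ρ ν)

/-- The action of `∂` on (generators of) the space of basic `h`-chains:
`∂(a ⊗ φ) = a ⊗ ((−λ₁^* − ⋯ − λ_h^* + ∂)φ)`. -/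
def chainD (R : LCAMod F L N) {h : ℕ} (φ : (Fin h → ℕ) → N) : (Fin h → ℕ) → N :=
  fun ρ => R.D (φ ρ) - ∑ i : Fin h, φ (Function.update ρ i (ρ i + 1))

/-- Contraction by a basic 1-chain `a₀ ⊗ m(x)`, where `m(x) = ∑ m_k x^k` is recorded
by its coefficient function `m : ℕ → N` (formula (3.23) of the paper, using the
pairing `⟨x^p, λ^q⟩ = q! δ_{p,q}`). -/
noncomputable def iota1 {k : ℕ} (a₀ : A) (m : ℕ → N)
    (γ : (Fin (k+1) → A) → (Fin (k+1) → ℕ) → N) : (Fin k → A) → (Fin k → ℕ) → N :=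
  fun a ν => ∑ᶠ q : ℕ, (q.factorial : F) • (m q * γ (Fin.cons a₀ a) (Fin.cons q ν))

/-- The Lie derivative `L_ξ = δ ∘ ι_ξ + ι_ξ ∘ δ` along a basic 1-chain. -/
noncomputable def lie1 (R : LCAMod F L N) {k : ℕ} (a₀ : A) (m : ℕ → N)
    (γ : (Fin (k+1) → A) → (Fin (k+1) → ℕ) → N) : (Fin (k+1) → A) → (Fin (k+1) → ℕ) → N :=
  deltaRaw L R (iota1 F a₀ m γ) + iota1 F a₀ m (deltaRaw L R γ)

end Product

end LCC

namespace LCC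

/-! ### Polynomials with coefficients in `M` -/

section Poly

variable {F : Type*} [Field F] {M : Type*} [AddCommGroup M] [Module F M]

/-- Polynomials in `K` variables with coefficients in `M`. -/
abbrev Poly (K : ℕ) (M : Type*) [AddCommGroup M] := (Fin K → ℕ) →₀ M

variable (F) in
/-- Multiplication by the variable `λ_i`. -/
noncomputable def pX {K : ℕ} (i : Fin K) : Poly K M →ₗ[F] Poly K M :=
  Finsupp.lmapDomain M F (fun ν => Function.update ν i (ν i + 1))

/-- Action of `∂` on coefficients. -/
noncomputable def pD {K : ℕ} (D : M →ₗ[F] M) : Poly K M →ₗ[F] Poly K M :=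
  Finsupp.mapRange.linearMap D

/-- `T = -∂ - ∑ λ_i`. -/
noncomputable def pT {K : ℕ} (D : M →ₗ[F] M) : Poly K M →ₗ[F] Poly K M :=
  - pD D - ∑ i, pX F i

variable (F) in
/-- Insert a new variable at position `i` -/
noncomputable def pI {K : ℕ} (i : Fin (K+1)) : Poly K M →ₗ[F] Poly (K+1) M :=
  Finsupp.lmapDomain M F (fun ν => i.insertNth (α := fun _ => ℕ) 0 ν)

@[simp] lemma pD_apply {K : ℕ} (D : M →ₗ[F] M) (v : Poly K M) (ν) : pD D v ν = D (v ν) := by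
  simp [pD]

lemma upd_inj {K : ℕ} (i : Fin K) :
    Function.Injective (fun ν : Fin K → ℕ => Function.update ν i (ν i + 1)) := by
  intro ν μ h
  funext r
  have := congrFun h r
  by_cases hr : r = i
  · subst hr; simpa using this
  · simpa [hr] using this

lemma pX_apply {K : ℕ} (i : Fin K) (v : Poly K M) (ν : Fin K → ℕ) :
    pX F i v ν = if ν i = 0 then 0 else v (Function.update ν i (ν i - 1)) := by
  split_ifs with h
  · rw [pX, Finsupp.lmapDomain_apply, Finsupp.mapDomain_of_notMem_range]
    rintro ⟨μ, hμ⟩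
    have := congrFun hμ i
    simp at this
    omega
  · have : ν = (fun ν : Fin K → ℕ => Function.update ν i (ν i + 1))
        (Function.update ν i (ν i - 1)) := by
      funext r
      by_cases hr : r = i
      · subst hr; simp; omega
      · simp [hr]
    conv_lhs => rw [this]
    rw [pX, Finsupp.lmapDomain_apply, Finsupp.mapDomain_apply (upd_inj i)]

lemma pI_apply {K : ℕ} (i : Fin (K+1)) (v : Poly K M) (ν : Fin (K+1) → ℕ) :
    pI F i v ν = if ν i = 0 then v (i.removeNth ν) else 0 := by
  split_ifs with h
  · have : ν = i.insertNth (α := fun _ => ℕ) 0 (i.removeNth ν) := by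
      rw [← h]; simp
    conv_lhs => rw [this]
    rw [pI, Finsupp.lmapDomain_apply, Finsupp.mapDomain_apply]
    exact Fin.insertNth_right_injective (α := fun _ => ℕ) (p := i) 0
  · rw [pI, Finsupp.lmapDomain_apply, Finsupp.mapDomain_of_notMem_range]
    rintro ⟨μ, hμ⟩
    apply h
    rw [← hμ]
    simp

lemma pX_comm {K : ℕ} (i j : Fin K) (v : Poly K M) :
    pX F i (pX F j v) = pX F j (pX F i v) := by
  by_cases hij : i = j
  · rw [hij]
  ext ν
  simp only [pX_apply]
  have hji : ¬ j = i := fun h => hij h.symm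
  simp only [Function.update_of_ne hij, Function.update_of_ne hji, Function.update_comm hij]
  split_ifs <;> rfl

lemma pX_pD {K : ℕ} (D : M →ₗ[F] M) (i : Fin K) (v : Poly K M) :
    pX F i (pD D v) = pD D (pX F i v) := by
  ext ν
  simp only [pX_apply, pD_apply]
  split_ifs <;> simp

lemma pX_pT {K : ℕ} (D : M →ₗ[F] M) (i : Fin K) (v : Poly K M) :
    pX F i (pT D v) = pT D (pX F i v) := by
  simp only [pT, LinearMap.sub_apply, LinearMap.neg_apply, LinearMap.sum_apply, map_sub, map_neg,
    map_sum, pX_pD, pX_comm i]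

lemma pD_pT {K : ℕ} (D : M →ₗ[F] M) (v : Poly K M) :
    pD D (pT D v) = pT D (pD D v) := by
  simp only [pT, LinearMap.sub_apply, LinearMap.neg_apply, LinearMap.sum_apply, map_sub, map_neg,
    map_sum, pX_pD]

lemma pI_pD {K : ℕ} (D : M →ₗ[F] M) (i : Fin (K+1)) (v : Poly K M) :
    pI F i (pD D v) = pD D (pI F i v) := by
  ext ν
  simp only [pI_apply, pD_apply]
  split_ifs <;> simp

lemma removeNth_update_succAbove {K : ℕ} (i : Fin (K+1)) (r : Fin K) (ν : Fin (K+1) → ℕ) (x : ℕ) :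
    i.removeNth (Function.update ν (i.succAbove r) x) = Function.update (i.removeNth ν) r x := by
  funext t
  simp only [Fin.removeNth]
  by_cases h : t = r
  · subst h; simp
  · rw [Function.update_of_ne h, Function.update_of_ne]
    rfl
    simpa using h

lemma removeNth_update_self {K : ℕ} (i : Fin (K+1)) (ν : Fin (K+1) → ℕ) (x : ℕ) :
    i.removeNth (Function.update ν i x) = (i.removeNth ν) := by
  funext t
  simp [Fin.removeNth]

lemma pI_pX {K : ℕ} (i : Fin (K+1)) (r : Fin K) (v : Poly K M) :
    pI F i (pX F r v) = pX F (i.succAbove r) (pI F i v) := by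
  ext ν
  simp only [pI_apply, pX_apply, removeNth_update_succAbove,
    Function.update_of_ne (Fin.succAbove_ne i r).symm]
  have h : i.removeNth ν r = ν (i.succAbove r) := rfl
  rw [h]
  split_ifs <;> rfl

lemma pI_pT {K : ℕ} (D : M →ₗ[F] M) (i : Fin (K+1)) (v : Poly K M) :
    pI F i (pT D v) = pT D (pI F i v) + pX F i (pI F i v) := by
  simp only [pT, LinearMap.sub_apply, LinearMap.neg_apply, LinearMap.sum_apply, map_sub, map_neg,
    map_sum, pI_pD, pI_pX, Fin.sum_univ_succAbove _ i, LinearMap.add_apply]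
  abel

lemma pX_last_single {K : ℕ} (ρ : Fin K → ℕ) (n : ℕ) (m : M) :
    pX F (Fin.last K) (Finsupp.single (Fin.snoc (α := fun _ => ℕ) ρ n) m)
      = Finsupp.single (Fin.snoc (α := fun _ => ℕ) ρ (n+1)) m := by
  simp [pX, Finsupp.lmapDomain_apply, Fin.update_snoc_last]

lemma pI_last_single {K : ℕ} (ρ : Fin K → ℕ) (m : M) :
    pI F (Fin.last K) (Finsupp.single ρ m)
      = Finsupp.single (Fin.snoc (α := fun _ => ℕ) ρ 0) m := by
  simp [pI, Finsupp.lmapDomain_apply, Fin.insertNth_last']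

variable (F) in
lemma poly_ind {K : ℕ} {p : Poly (K+1) M → Prop}
    (hadd : ∀ v w, p v → p w → p (v + w)) (hP : ∀ u, p (pI F (Fin.last K) u))
    (hX : ∀ v, p v → p (pX F (Fin.last K) v)) (v) : p v := by
  induction v using Finsupp.induction_linear with
  | zero => simpa using hP 0
  | add f g hf hg => exact hadd f g hf hg
  | single ν m =>
    have key : ∀ (n : ℕ) (ρ : Fin K → ℕ),
        p (Finsupp.single (Fin.snoc (α := fun _ => ℕ) ρ n) m) := by
      intro n ρ
      induction n with
      | zero => rw [← pI_last_single (F := F)]; exact hP _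
      | succ n ih => rw [← pX_last_single (F := F)]; exact hX _ ih
    have := key (ν (Fin.last K)) (Fin.init ν)
    rwa [Fin.snoc_init_self] at this

/-- The linear map on `Poly (K+1)` extending `f` and intertwining `λ_last` with `W`. -/
noncomputable def pLift {K : ℕ} {N : Type*} [AddCommGroup N] [Module F N]
    (f : Poly K M →ₗ[F] N) (W : N →ₗ[F] N) : Poly (K+1) M →ₗ[F] N :=
  Finsupp.lsum F (fun ν => (W ^ (ν (Fin.last K))) ∘ₗ f ∘ₗ Finsupp.lsingle (Fin.init ν))

lemma pLift_single {K : ℕ} {N : Type*} [AddCommGroup N] [Module F N]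
    (f : Poly K M →ₗ[F] N) (W : N →ₗ[F] N) (ρ : Fin K → ℕ) (n : ℕ) (m : M) :
    pLift f W (Finsupp.single (Fin.snoc (α := fun _ => ℕ) ρ n) m)
      = (W ^ n) (f (Finsupp.single ρ m)) := by
  simp [pLift]

@[simp] lemma pLift_pI {K : ℕ} {N : Type*} [AddCommGroup N] [Module F N]
    (f : Poly K M →ₗ[F] N) (W : N →ₗ[F] N) (u : Poly K M) :
    pLift f W (pI F (Fin.last K) u) = f u := by
  induction u using Finsupp.induction_linear with
  | zero => simp
  | add f g hf hg => simp only [map_add, hf, hg]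
  | single ν m => rw [pI_last_single, pLift_single]; simp

@[simp] lemma pLift_pX {K : ℕ} {N : Type*} [AddCommGroup N] [Module F N]
    (f : Poly K M →ₗ[F] N) (W : N →ₗ[F] N) (u : Poly (K+1) M) :
    pLift f W (pX F (Fin.last K) u) = W (pLift f W u) := by
  induction u using Finsupp.induction_linear with
  | zero => simp
  | add f g hf hg => simp only [map_add, hf, hg]
  | single ν m =>
    rw [← Fin.snoc_init_self ν, pX_last_single, pLift_single, pLift_single, pow_succ']
    rfl

/-- Substitution `λ_last ↦ λ†`. -/
noncomputable def pS {K : ℕ} (D : M →ₗ[F] M) : Poly (K+1) M →ₗ[F] Poly K M :=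
  pLift LinearMap.id (pT D)

@[simp] lemma pS_pI {K : ℕ} (D : M →ₗ[F] M) (u : Poly K M) :
    pS D (pI F (Fin.last K) u) = u := by simp [pS]

@[simp] lemma pS_pX_last {K : ℕ} (D : M →ₗ[F] M) (u : Poly (K+1) M) :
    pS D (pX F (Fin.last K) u) = pT D (pS D u) := by simp [pS]

lemma pS_pX {K : ℕ} (D : M →ₗ[F] M) (r : Fin K) (u : Poly (K+1) M) :
    pS D (pX F r.castSucc u) = pX F r (pS D u) := by
  induction u using poly_ind F (M := M) with
  | hadd v w hv hw => simp only [map_add, hv, hw]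
  | hP u =>
    rw [pS_pI, ← Fin.succAbove_last_apply, ← pI_pX, pS_pI]
  | hX v ih => rw [pX_comm, pS_pX_last, ih, pS_pX_last, pX_pT]

lemma pS_pD {K : ℕ} (D : M →ₗ[F] M) (u : Poly (K+1) M) :
    pS D (pD D u) = pD D (pS D u) := by
  induction u using poly_ind F (M := M) with
  | hadd v w hv hw => simp only [map_add, hv, hw]
  | hP u => rw [pS_pI, ← pI_pD, pS_pI]
  | hX v ih => rw [← pX_pD, pS_pX_last, ih, pS_pX_last, pD_pT]

@[simp] lemma pS_pT {K : ℕ} (D : M →ₗ[F] M) (u : Poly (K+1) M) :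
    pS D (pT D u) = 0 := by
  conv_lhs => rw [pT]
  simp only [LinearMap.sub_apply, LinearMap.neg_apply, LinearMap.add_apply, LinearMap.sum_apply,
    map_sub, map_neg, map_sum, pS_pD, Fin.sum_univ_castSucc, pS_pX, pS_pX_last, map_add]
  conv_lhs => simp only [pT]
  simp only [LinearMap.sub_apply, LinearMap.neg_apply, LinearMap.sum_apply]
  abel

/-- Every polynomial is determined by its substitution modulo the image of `T`. -/
lemma exists_pT {K : ℕ} (D : M →ₗ[F] M) (v : Poly (K+1) M) :
    ∃ w, v = pI F (Fin.last K) (pS D v) + pT D w := by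
  induction v using poly_ind F (M := M) with
  | hadd v w hv hw =>
    obtain ⟨a, ha⟩ := hv
    obtain ⟨b, hb⟩ := hw
    refine ⟨a + b, ?_⟩
    conv_lhs => rw [ha, hb]
    simp only [map_add]; abel
  | hP u => exact ⟨0, by simp⟩
  | hX v ih =>
    obtain ⟨a, ha⟩ := ih
    refine ⟨pX F (Fin.last K) a - pI F (Fin.last K) (pS D v), ?_⟩
    conv_lhs => rw [ha]
    rw [pS_pX_last, pI_pT, map_sub, map_add, ← pX_pT]
    abel

lemma exists_pT_of_pS {K : ℕ} (D : M →ₗ[F] M) (v : Poly (K+1) M) (h : pS D v = 0) :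
    ∃ w, v = pT D w := by
  obtain ⟨w, hw⟩ := exists_pT D v
  exact ⟨w, by simpa [h] using hw⟩

lemma pT_apply {K : ℕ} (D : M →ₗ[F] M) (v : Poly K M) (ν : Fin K → ℕ) :
    pT D v ν = - D (v ν) -
      ∑ i, if ν i = 0 then 0 else v (Function.update ν i (ν i - 1)) := by
  simp [pT, pX_apply]

lemma pT_inj {K : ℕ} (D : M →ₗ[F] M) (v : Poly (K+1) M) (h : pT D v = 0) : v = 0 := by
  obtain ⟨N, hN⟩ : ∃ N, ∀ ν, N ≤ ν (Fin.last K) → v ν = 0 := by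
    refine ⟨v.support.sup (fun ν => ν (Fin.last K)) + 1, fun ν hν => ?_⟩
    by_contra hne
    have := Finset.le_sup (f := fun ν : Fin (K+1) → ℕ => ν (Fin.last K))
      (Finsupp.mem_support_iff.2 hne)
    omega
  have key : ∀ d, ∀ ν, N ≤ ν (Fin.last K) + d → v ν = 0 := by
    intro d
    induction d with
    | zero => exact fun ν hν => hN ν hν
    | succ d ih =>
      intro ν hν
      have h1 := DFunLike.congr_fun h (Function.update ν (Fin.last K) (ν (Fin.last K) + 1))
      rw [pT_apply, Fin.sum_univ_castSucc, ih _ (by simp; omega)] at h1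
      rw [Finset.sum_eq_zero] at h1
      · simpa using h1
      · intro r _
        split_ifs with h2
        · rfl
        · apply ih
          rw [Function.update_of_ne (Fin.castSucc_lt_last r).ne']
          simp
          omega
  ext ν
  exact key N ν (by omega)

end Poly

end LCC

namespace LCC

section Comb

lemma mnom_spec {K : ℕ} (m : Fin K → ℕ) (s : ℕ) :
    mnom m s * ((∏ r, (m r).factorial) * s.factorial) = (wt m + s).factorial := by
  unfold mnom
  apply Nat.div_mul_cancel
  refine (Nat.mul_dvd_mul_right (Nat.prod_factorial_dvd_factorial_sum _ _) _).trans ?_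
  exact Nat.factorial_mul_factorial_dvd_factorial_add _ _

/-- Multinomial coefficient with total `n`. -/
def mE {K : ℕ} (n : ℕ) (m : Fin K → ℕ) : ℕ := if wt m ≤ n then mnom m (n - wt m) else 0

lemma wt_upd {K : ℕ} (m : Fin K → ℕ) (i : Fin K) (h : m i ≠ 0) :
    wt (Function.update m i (m i - 1)) + 1 = wt m := by
  unfold wt
  rw [← Finset.add_sum_erase _ _ (Finset.mem_univ i),
    ← Finset.add_sum_erase _ m (Finset.mem_univ i)]
  rw [Finset.sum_congr rfl (g := m)]
  · rw [Function.update_self]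
    change m i - 1 + (Finset.univ.erase i).sum m + 1 = m i + (Finset.univ.erase i).sum m
    omega
  · intro r hr
    rw [Function.update_of_ne (Finset.ne_of_mem_erase hr)]

lemma prod_upd {K : ℕ} (m : Fin K → ℕ) (i : Fin K) (h : m i ≠ 0) :
    (∏ r, (Function.update m i (m i - 1) r).factorial) * m i = ∏ r, (m r).factorial := by
  rw [← Finset.mul_prod_erase _ _ (Finset.mem_univ i),
    ← Finset.mul_prod_erase _ (fun r => (m r).factorial) (Finset.mem_univ i)]
  rw [Finset.prod_congr rfl (g := fun r => (m r).factorial)]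
  · have := Nat.mul_factorial_pred h
    simp only [Function.update_self]
    rw [← this]; ring
  · intro r hr
    rw [Function.update_of_ne (Finset.ne_of_mem_erase hr)]

lemma mE_succ {K : ℕ} (n : ℕ) (m : Fin K → ℕ) :
    mE (n+1) m = mE n m + ∑ i, if m i = 0 then 0 else mE n (Function.update m i (m i - 1)) := by
  by_cases hle : wt m ≤ n + 1
  swap
  · have h1 : ¬ wt m ≤ n := by omega
    rw [mE, mE, if_neg hle, if_neg h1, zero_add]
    symm
    refine Finset.sum_eq_zero (fun i _ => ?_)
    split_ifs with h
    · rfl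
    · have := wt_upd m i h
      rw [mE, if_neg (by omega)]
  obtain ⟨s, hs⟩ := Nat.exists_eq_add_of_le hle
  have hc : 0 < (∏ r, (m r).factorial) * s.factorial :=
    Nat.mul_pos (Finset.prod_pos fun r _ => Nat.factorial_pos _) (Nat.factorial_pos _)
  apply Nat.eq_of_mul_eq_mul_right hc
  have e1 : mE (n+1) m * ((∏ r, (m r).factorial) * s.factorial) = (n+1).factorial := by
    rw [mE, if_pos hle, hs, Nat.add_sub_cancel_left, mnom_spec]
  have e2 : mE n m * ((∏ r, (m r).factorial) * s.factorial) = s * n.factorial := by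
    rcases Nat.eq_zero_or_pos s with h0 | h0
    · rw [mE, if_neg (by omega), h0]; simp
    · rw [mE, if_pos (by omega)]
      have h2 : n - wt m = s - 1 := by omega
      have h3 := mnom_spec m (s-1)
      rw [show wt m + (s - 1) = n by omega] at h3
      rw [h2, ← h3, ← Nat.mul_factorial_pred h0.ne']
      ring
  have e3 : ∀ i, (if m i = 0 then 0 else mE n (Function.update m i (m i - 1)))
      * ((∏ r, (m r).factorial) * s.factorial) = m i * n.factorial := by
    intro i
    split_ifs with h
    · simp [h]
    · have h1 := wt_upd m i h
      rw [mE, if_pos (by omega), show n - wt (Function.update m i (m i - 1)) = s by omega]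
      have h3 := mnom_spec (Function.update m i (m i - 1)) s
      rw [show wt (Function.update m i (m i - 1)) + s = n by omega] at h3
      rw [← h3, ← prod_upd m i h]
      ring
  rw [e1, add_mul, e2, Finset.sum_mul, Finset.sum_congr rfl (fun i _ => e3 i), ← Finset.sum_mul,
    ← add_mul, Nat.factorial_succ, hs]
  congr 1
  unfold wt
  ring

end Comb

section Subst

variable {F : Type*} [Field F] {M : Type*} [AddCommGroup M] [Module F M]

open Classical in
lemma pT_pow_single {K : ℕ} (D : M →ₗ[F] M) (n : ℕ) (ρ : Fin K → ℕ) (m : M) (ν : Fin K → ℕ) :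
    (pT D ^ n) (Finsupp.single ρ m) ν = if ρ ≤ ν then
      ((-1 : F)^n * (mE n (fun r => ν r - ρ r) : F)) •
        (D ^ (n - wt (fun r => ν r - ρ r))) m else 0 := by
  induction n generalizing ν with
  | zero =>
    simp only [pow_zero, Module.End.one_apply, Finsupp.single_apply, one_mul, Nat.zero_sub]
    by_cases h : ρ = ν
    · subst h
      simp [mE, wt, mnom]
    · rw [if_neg h]
      split_ifs with h1
      · rw [mE, if_neg]
        · simp
        · intro h2
          apply h
          unfold wt at h2
          simp only [nonpos_iff_eq_zero, Finset.sum_eq_zero_iff, Finset.mem_univ,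
            true_implies] at h2
          funext r
          have h3 : ρ r ≤ ν r := h1 r
          have h4 : ν r - ρ r = 0 := h2 r
          omega
      · rfl
  | succ n ih =>
    rw [pow_succ', Module.End.mul_apply, pT_apply]
    simp only [ih]
    by_cases hle : ρ ≤ ν
    · rw [if_pos hle, if_pos hle, mE_succ]
      have t1 : -D (((-1 : F)^n * (mE n (fun r => ν r - ρ r) : F)) •
          (D ^ (n - wt (fun r => ν r - ρ r))) m) =
          ((-1 : F)^(n+1) * (mE n (fun r => ν r - ρ r) : F)) •
            (D ^ (n + 1 - wt (fun r => ν r - ρ r))) m := by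
        by_cases h : wt (fun r => ν r - ρ r) ≤ n
        · rw [show n + 1 - wt (fun r => ν r - ρ r) = (n - wt (fun r => ν r - ρ r)) + 1 by omega,
            pow_succ' D, Module.End.mul_apply, map_smul, ← neg_smul, pow_succ]
          congr 1; ring
        · rw [mE, if_neg h]; simp
      have t2 : ∀ i, -(if ν i = 0 then 0 else
          if ρ ≤ Function.update ν i (ν i - 1) then
          ((-1 : F)^n * (mE n (fun r => Function.update ν i (ν i - 1) r - ρ r) : F)) •
          (D ^ (n - wt (fun r => Function.update ν i (ν i - 1) r - ρ r))) m else 0) =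
          ((-1 : F)^(n+1) * ((if ν i - ρ i = 0 then 0 else
            mE n (Function.update (fun r => ν r - ρ r) i (ν i - ρ i - 1)) : ℕ) : F)) •
            (D ^ (n + 1 - wt (fun r => ν r - ρ r))) m := by
        intro i
        have hi := hle i
        by_cases h0 : ν i - ρ i = 0
        · rw [if_pos h0]
          have : ¬ (ν i ≠ 0 ∧ ρ ≤ Function.update ν i (ν i - 1)) := by
            rintro ⟨h1, h2⟩
            have := h2 i
            simp at this
            omega
          split_ifs with h1 h2
          · simp
          · exact absurd ⟨h1, h2⟩ this
          · simp
        · have h2 : ρ ≤ Function.update ν i (ν i - 1) := by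
            intro r
            by_cases hr : r = i
            · subst hr; simp; omega
            · simpa [hr] using hle r
          have h3 : (fun r => Function.update ν i (ν i - 1) r - ρ r) =
              Function.update (fun r => ν r - ρ r) i (ν i - ρ i - 1) := by
            funext r
            by_cases hr : r = i
            · subst hr; simp; omega
            · simp [hr]
          have h4 := wt_upd (fun r => ν r - ρ r) i h0
          rw [if_neg h0, if_neg (by omega), if_pos h2, h3, ← neg_smul, pow_succ]
          rw [show n + 1 - wt (fun r => ν r - ρ r) =
            n - wt (Function.update (fun r => ν r - ρ r) i (ν i - ρ i - 1)) by omega]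
          congr 1; ring
      rw [t1, sub_eq_add_neg, ← Finset.sum_neg_distrib, Finset.sum_congr rfl (fun i _ => t2 i),
        ← Finset.sum_smul, ← add_smul, ← Finset.mul_sum, ← mul_add]
      push_cast
      rfl
    · rw [if_neg hle, if_neg hle, Finset.sum_eq_zero]
      · simp
      · intro i _
        split_ifs with h1 h2
        · rfl
        · exfalso
          apply hle
          refine h2.trans ?_
          intro r
          by_cases hr : r = i
          · subst hr; simp
          · simp [hr]
        · rfl

open Classical in
lemma substDag_single {K : ℕ} (D : M →ₗ[F] M) (μ : Fin (K+1) → ℕ) (m : M) (ν : Fin K → ℕ) :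
    substDag D (fun ρ n => (Finsupp.single μ m : Poly (K+1) M) (Fin.snoc (α := fun _ => ℕ) ρ n)) ν
      = pS D (Finsupp.single μ m) ν := by
  obtain ⟨ρ₀, n₀, rfl⟩ : ∃ ρ n, μ = Fin.snoc (α := fun _ => ℕ) ρ n :=
    ⟨Fin.init μ, μ (Fin.last K), by simp⟩
  rw [pS, pLift_single, LinearMap.id_apply, pT_pow_single, substDag]
  have hs : ∀ ρ n, (Finsupp.single (Fin.snoc (α := fun _ => ℕ) ρ₀ n₀) m : Poly (K+1) M)
      (Fin.snoc (α := fun _ => ℕ) ρ n) = if ρ₀ = ρ ∧ n₀ = n then m else 0 := by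
    intro ρ n
    rw [Finsupp.single_apply]
    simp only [Fin.snoc_inj]
  simp only [hs]
  have hz : ∀ ρ, ρ₀ ≠ ρ → ∑ᶠ s : ℕ,
    (((-1 : F)^(wt (fun r => ν r - ρ r) + s)) * (mnom (fun r => ν r - ρ r) s : F)) •
      ((D ^ s) (if ρ₀ = ρ ∧ n₀ = wt (fun r => ν r - ρ r) + s then m else 0)) = 0 := by
    intro ρ h
    simp [h]
  split_ifs with hle
  · rw [Finset.sum_eq_single_of_mem ρ₀ (Finset.mem_Iic.2 hle) (fun ρ _ h => hz ρ h.symm)]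
    by_cases h : wt (fun r => ν r - ρ₀ r) ≤ n₀
    · rw [finsum_eq_single _ (n₀ - wt (fun r => ν r - ρ₀ r))]
      · rw [mE, if_pos h, Nat.add_sub_cancel' h]
        simp
      · intro s hs
        rw [if_neg (by omega)]
        simp
    · rw [mE, if_neg h]
      rw [finsum_eq_zero_of_forall_eq_zero]
      · simp
      · intro s
        rw [if_neg (by omega)]
        simp
  · refine Finset.sum_eq_zero (fun ρ hρ => hz ρ ?_)
    rintro rfl
    exact hle (Finset.mem_Iic.1 hρ)

lemma substDag_poly {K : ℕ} (D : M →ₗ[F] M) (v : Poly (K+1) M) (ν : Fin K → ℕ) :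
    substDag D (fun ρ n => v (Fin.snoc (α := fun _ => ℕ) ρ n)) ν = pS D v ν := by
  induction v using Finsupp.induction_linear with
  | zero => simp [substDag]
  | single μ m => exact substDag_single D μ m ν
  | add f g hf hg =>
    rw [map_add, Finsupp.add_apply, ← hf, ← hg]
    unfold substDag
    rw [← Finset.sum_add_distrib]
    refine Finset.sum_congr rfl (fun ρ _ => ?_)
    have hfin : ∀ v : Poly (K+1) M, (Function.support fun s : ℕ =>
        (((-1 : F)^(wt (fun r => ν r - ρ r) + s)) * (mnom (fun r => ν r - ρ r) s : F)) •
      ((D ^ s) (v (Fin.snoc (α := fun _ => ℕ) ρ (wt (fun r => ν r - ρ r) + s))))).Finite := by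
      intro v
      have hi : Function.Injective (fun s : ℕ =>
          (Fin.snoc (α := fun _ => ℕ) ρ (wt (fun r => ν r - ρ r) + s) : Fin (K+1) → ℕ)) := by
        intro s t h
        simpa using h
      refine (v.support.finite_toSet.preimage hi.injOn).subset ?_
      intro s hs
      simp only [Function.mem_support] at hs
      simp only [Set.mem_preimage, Finset.mem_coe, Finsupp.mem_support_iff]
      intro h
      rw [h] at hs
      simp at hs
    rw [← finsum_add_distrib (hfin f) (hfin g)]
    refine finsum_congr (fun s => ?_)
    simp

lemma substDag_eq {K : ℕ} (D : M →ₗ[F] M) (v : Poly (K+1) M)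
    (q : (Fin K → ℕ) → ℕ → M) (hq : ∀ ρ n, q ρ n = v (Fin.snoc (α := fun _ => ℕ) ρ n)) :
    substDag D q = pS D v := by
  funext ν
  rw [← substDag_poly]
  congr 1
  funext ρ n
  exact hq ρ n

end Subst

section Ops

variable {F : Type*} [Field F] {M : Type*} [AddCommGroup M] [Module F M]

/-- Apply a `λ_i`-action to a polynomial. -/
noncomputable def pA {K : ℕ} (B : M →ₗ[F] (ℕ →₀ M)) (i : Fin (K+1)) :
    Poly K M →ₗ[F] Poly (K+1) M :=
  Finsupp.lsum F (fun ν =>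
    (Finsupp.lmapDomain M F (fun n => i.insertNth (α := fun _ => ℕ) n ν)) ∘ₗ B)

lemma pA_apply {K : ℕ} (B : M →ₗ[F] (ℕ →₀ M)) (i : Fin (K+1)) (v : Poly K M)
    (ν : Fin (K+1) → ℕ) : pA B i v ν = B (v (i.removeNth ν)) (ν i) := by
  induction v using Finsupp.induction_linear with
  | zero => simp
  | add f g hf hg => simp [hf, hg]
  | single μ m =>
    simp only [pA, Finsupp.lsum_single, LinearMap.comp_apply, Finsupp.lmapDomain_apply]
    by_cases h : μ = i.removeNth ν
    · have h2 : ν = (fun n => i.insertNth (α := fun _ => ℕ) n μ) (ν i) := by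
        simp [h]
      conv_lhs => rw [h2]
      rw [Finsupp.mapDomain_apply (Fin.insertNth_left_injective (α := fun _ => ℕ) (p := i) μ), h]
      simp
    · rw [Finsupp.mapDomain_of_notMem_range]
      · rw [Finsupp.single_apply, if_neg h]; simp
      · rintro ⟨n, rfl⟩
        apply h
        simp

lemma pA_pX {K : ℕ} (B : M →ₗ[F] (ℕ →₀ M)) (i : Fin (K+1)) (r : Fin K) (v : Poly K M) :
    pA B i (pX F r v) = pX F (i.succAbove r) (pA B i v) := by
  ext ν
  simp only [pA_apply, pX_apply, removeNth_update_succAbove,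
    Function.update_of_ne (Fin.succAbove_ne i r).symm]
  have h : i.removeNth ν r = ν (i.succAbove r) := rfl
  rw [h]
  split_ifs <;> simp

lemma pA_pD {K : ℕ} (D : M →ₗ[F] M) (B : M →ₗ[F] (ℕ →₀ M))
    (hB : ∀ m n, B (D m) n = D (B m n) + (if n = 0 then 0 else B m (n-1)))
    (i : Fin (K+1)) (v : Poly K M) :
    pA B i (pD D v) = pD D (pA B i v) + pX F i (pA B i v) := by
  ext ν
  simp only [pA_apply, pX_apply, pD_apply, Finsupp.add_apply, hB, removeNth_update_self,
    Function.update_self]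

lemma pA_pT {K : ℕ} (D : M →ₗ[F] M) (B : M →ₗ[F] (ℕ →₀ M))
    (hB : ∀ m n, B (D m) n = D (B m n) + (if n = 0 then 0 else B m (n-1)))
    (i : Fin (K+1)) (v : Poly K M) :
    pA B i (pT D v) = pT D (pA B i v) := by
  simp only [pT, LinearMap.sub_apply, LinearMap.neg_apply, LinearMap.sum_apply, map_sub, map_neg,
    map_sum, pA_pD D B hB, pA_pX, Fin.sum_univ_succAbove _ i, LinearMap.add_apply]
  abel

lemma succAbove_castSucc_last {K : ℕ} (i : Fin (K+1)) :
    i.castSucc.succAbove (Fin.last K) = Fin.last (K+1) := by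
  rw [Fin.succAbove_of_le_castSucc _ _ (by simpa using Fin.le_last i)]
  simp

lemma removeNth_castSucc {α : Type*} {K : ℕ} (i : Fin (K+1)) (ν : Fin (K+2) → α) :
    (Fin.last K).removeNth (i.castSucc.removeNth ν) =
      i.removeNth ((Fin.last (K+1)).removeNth ν) := by
  funext r
  simp [Fin.removeNth]

lemma pA_pI {K : ℕ} (B : M →ₗ[F] (ℕ →₀ M)) (i : Fin (K+1)) (u : Poly K M) :
    pA B i.castSucc (pI F (Fin.last K) u) = pI F (Fin.last (K+1)) (pA B i u) := by
  ext ν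
  simp only [pA_apply, pI_apply, removeNth_castSucc]
  have h : i.castSucc.removeNth ν (Fin.last K) = ν (Fin.last (K+1)) := by
    simp [Fin.removeNth]
  have h2 : (Fin.last (K+1)).removeNth ν i = ν i.castSucc := by
    simp [Fin.removeNth]
  rw [h, h2]
  split_ifs <;> simp

/-- Term A. -/
lemma termA {K : ℕ} (D : M →ₗ[F] M) (B : M →ₗ[F] (ℕ →₀ M))
    (hB : ∀ m n, B (D m) n = D (B m n) + (if n = 0 then 0 else B m (n-1)))
    (i : Fin (K+1)) (v : Poly (K+1) M) :
    pS D (pA B i.castSucc v) = pA B i (pS D v) := by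
  induction v using poly_ind F (M := M) with
  | hadd v w hv hw => simp only [map_add, hv, hw]
  | hP u => rw [pA_pI, pS_pI, pS_pI]
  | hX v ih => rw [pA_pX, succAbove_castSucc_last, pS_pX_last, ih, pS_pX_last, pA_pT D B hB]

/-- Term B. -/
lemma termB {K : ℕ} (D : M →ₗ[F] M) (B : M →ₗ[F] (ℕ →₀ M))
    (hB : ∀ m n, B (D m) n = D (B m n) + (if n = 0 then 0 else B m (n-1)))
    (v : Poly (K+1) M) :
    pS D (pA B (Fin.last (K+1)) v) =
      pS D (pA B (Fin.last (K+1)) (pI F (Fin.last K) (pS D v))) := by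
  induction v using poly_ind F (M := M) with
  | hadd v w hv hw => simp only [map_add, hv, hw]
  | hP u => rw [pS_pI]
  | hX v ih =>
    rw [pA_pX, Fin.succAbove_last_apply, pS_pX, ih, pS_pX_last, pI_pT, map_add, map_add,
      pA_pT D B hB, pS_pT, zero_add, pA_pX, Fin.succAbove_last_apply, pS_pX]

variable (F) in
/-- Substitution of the last variable by `λ_i + λ_j` where `i = j.succAbove i'`. -/
noncomputable def pJ {K : ℕ} (j : Fin (K+2)) (i' : Fin (K+1)) :
    Poly (K+1) M →ₗ[F] Poly (K+2) M :=
  pLift (pI F j ∘ₗ pI F i') (pX F (j.succAbove i') + pX F j)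

lemma pJ_apply {K : ℕ} (j : Fin (K+2)) (i' : Fin (K+1)) (v : Poly (K+1) M) (ν : Fin (K+2) → ℕ) :
    pJ F j i' v ν = ((ν (j.succAbove i') + ν j).choose (ν (j.succAbove i')) : F) •
      v (Fin.snoc (α := fun _ => ℕ) (i'.removeNth (j.removeNth ν))
        (ν (j.succAbove i') + ν j)) := by
  induction v using poly_ind F (M := M) generalizing ν with
  | hadd v w hv hw => simp only [map_add, Finsupp.add_apply, hv, hw, smul_add]
  | hP u =>
    have h : j.removeNth ν i' = ν (j.succAbove i') := rfl
    simp only [pJ, pLift_pI, LinearMap.comp_apply, pI_apply, h, Fin.snoc_last]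
    by_cases h1 : ν j = 0
    · by_cases h2 : ν (j.succAbove i') = 0
      · simp [h1, h2, Fin.removeNth_last]
      · simp [h2]
    · simp [h1]
  | hX v ih =>
    have e : pJ F j i' (pX F (Fin.last K) v) =
      pX F (j.succAbove i') (pJ F j i' v) + pX F j (pJ F j i' v) := by
      simp [pJ]
    have h3 : i'.removeNth (Function.update (j.removeNth ν) i' (ν (j.succAbove i') - 1)) =
      i'.removeNth (j.removeNth ν) := removeNth_update_self _ _ _
    rw [e, Finsupp.add_apply, pX_apply, pX_apply, ih, ih]
    simp only [Function.update_self, removeNth_update_self, removeNth_update_succAbove,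
      Function.update_of_ne (Fin.succAbove_ne j i'),
      Function.update_of_ne (Fin.succAbove_ne j i').symm, pX_apply, Fin.snoc_last,
      Fin.update_snoc_last]
    generalize ν (j.succAbove i') = x
    generalize ν j = y
    rcases x with _ | x
    · rcases y with _ | y
      · simp
      · simp
    · rcases y with _ | y
      · simp
      · simp only [Nat.add_eq_zero_iff, one_ne_zero, and_false, if_false, Nat.add_sub_cancel]
        rw [show x + 1 + (y+1) - 1 = x + (y+1) by omega, show x + 1 + y = x + (y + 1) by omega,
          show x + 1 + (y + 1) = (x + (y+1)) + 1 by omega, ← add_smul]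
        rw [Nat.choose_succ_succ]
        push_cast
        rfl

/-- Term C. -/
lemma termC {K : ℕ} (D : M →ₗ[F] M) (j : Fin (K+2)) (i' : Fin (K+1)) (v : Poly (K+2) M) :
    pS D (pJ F j.castSucc i'.castSucc v) =
      pS D (pI F j.castSucc (pI F i'.castSucc (pS D v))) := by
  induction v using poly_ind F (M := M) with
  | hadd v w hv hw => simp only [map_add, hv, hw]
  | hP u => simp [pJ]
  | hX v ih =>
    have e : pJ F j.castSucc i'.castSucc (pX F (Fin.last (K+1)) v) =
      pX F (j.succAbove i').castSucc (pJ F j.castSucc i'.castSucc v)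
        + pX F j.castSucc (pJ F j.castSucc i'.castSucc v) := by
      simp [pJ]
    rw [e, map_add, pS_pX, pS_pX, ih, pS_pX_last, pI_pT, map_add, pI_pT, map_add, map_add, pS_pT,
      pI_pX, Fin.castSucc_succAbove_castSucc, pS_pX, pS_pX, zero_add]
    abel

/-- Term D. -/
lemma termD {K : ℕ} (D : M →ₗ[F] M) (i : Fin (K+1)) (v : Poly (K+1) M) :
    pS D (pJ F (Fin.last (K+1)) i v) = pI F i (pS D v) := by
  induction v using poly_ind F (M := M) with
  | hadd v w hv hw => simp only [map_add, hv, hw]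
  | hP u => simp [pJ]
  | hX v ih =>
    have e : pJ F (Fin.last (K+1)) i (pX F (Fin.last K) v) =
      pX F i.castSucc (pJ F (Fin.last (K+1)) i v)
        + pX F (Fin.last (K+1)) (pJ F (Fin.last (K+1)) i v) := by
      simp [pJ]
    rw [e, map_add, pS_pX, pS_pX_last, ih, pS_pX_last, pI_pT]; abel

lemma pX_pow_apply {K : ℕ} (i : Fin K) (p : ℕ) (v : Poly K M) (ν : Fin K → ℕ) :
    (pX F i ^ p) v ν = if p ≤ ν i then v (Function.update ν i (ν i - p)) else 0 := by
  induction p generalizing ν with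
  | zero => simp
  | succ p ih =>
    rw [pow_succ', Module.End.mul_apply, pX_apply]
    simp only [ih, Function.update_self, Function.update_idem]
    split_ifs with h1 h2 h3 h3 h3
    · omega
    · rfl
    · rw [Nat.sub_sub, add_comm 1]
    · omega
    · omega
    · rfl

lemma sum_pX_pow_apply {K : ℕ} (i : Fin K) (s : Finset ℕ) (w : ℕ → Poly K M)
    (hw : ∀ p, p ∉ s → w p = 0) (ν : Fin K → ℕ) :
    (∑ p ∈ s, (pX F i ^ p) (w p)) ν =
      ∑ p ∈ Finset.range (ν i + 1), w p (Function.update ν i (ν i - p)) := by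
  rw [Finsupp.finsetSum_apply]
  simp only [pX_pow_apply]
  rw [← Finset.sum_filter]
  apply Finset.sum_subset_zero_on_sdiff
  · intro p hp
    simp only [Finset.mem_filter] at hp
    simp; omega
  · intro p hp
    simp only [Finset.mem_sdiff, Finset.mem_filter, Finset.mem_range] at hp
    rw [hw p (fun h => hp.2 ⟨h, by omega⟩)]
    rfl
  · intros; rfl

end Ops

end LCC

namespace LCC

section Indices

lemma rm1_eq {α : Type*} {k : ℕ} (i : Fin (k+1)) (a : Fin (k+1) → α) :
    rm1 i.1 a = i.removeNth a := by
  funext r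
  simp only [rm1, Fin.removeNth]
  congr 1
  ext
  simp only [skip1, Fin.succAbove, Fin.lt_def, Fin.val_castSucc]
  split_ifs <;> simp

/-- The index `i` of `{0,…,n-1}` lying below `j`. -/
def ipre {n : ℕ} (i j : Fin (n+1)) (h : i < j) : Fin n := ⟨i.1, by omega⟩

lemma succAbove_ipre {n : ℕ} (i j : Fin (n+1)) (h : i < j) : j.succAbove (ipre i j h) = i := by
  rw [Fin.succAbove_of_castSucc_lt]
  · rfl
  · exact h

lemma rm2_eq {α : Type*} {k : ℕ} (i j : Fin (k+2)) (h : i < j) (a : Fin (k+2) → α) :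
    rm2 i.1 j.1 a = (ipre i j h).removeNth (j.removeNth a) := by
  funext r
  simp only [rm2, Fin.removeNth]
  congr 1
  ext
  have h' : i.1 < j.1 := h
  simp only [skip2, Fin.succAbove, Fin.lt_def, Fin.val_castSucc, ipre]
  split_ifs <;> simp_all <;> omega

lemma removeNth_castSucc_snoc {α : Type*} {k : ℕ} (j : Fin (k+1)) (ρ : Fin (k+1) → α) (n : α) :
    j.castSucc.removeNth (Fin.snoc (α := fun _ => α) ρ n : Fin (k+2) → α)
      = Fin.snoc (α := fun _ => α) (j.removeNth ρ) n := by
  funext r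
  refine Fin.lastCases ?_ (fun r => ?_) r
  · simp [Fin.removeNth]
  · simp [Fin.removeNth]

lemma rm2_castSucc {α : Type*} {k : ℕ} (i j : Fin (k+2)) (h : i < j) (a : Fin (k+3) → α) :
    rm2 (k := k+1) i.castSucc.1 j.castSucc.1 a =
      Fin.snoc (α := fun _ => α) (rm2 i.1 j.1 (Fin.init a)) (a (Fin.last (k+2))) := by
  conv_lhs => rw [← Fin.snoc_init_self a]
  rw [rm2_eq i.castSucc j.castSucc h, rm2_eq i j h, removeNth_castSucc_snoc]
  exact removeNth_castSucc_snoc (ipre i j h) _ _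

lemma rm2_last {α : Type*} {k : ℕ} (i : Fin (k+1)) (a : Fin (k+2) → α) :
    rm2 i.castSucc.1 (Fin.last (k+1)).1 a = rm1 i.1 (Fin.init a) := by
  rw [rm2_eq i.castSucc (Fin.last (k+1)) (Fin.castSucc_lt_last i), rm1_eq, Fin.removeNth_last]
  rfl

lemma rm1_last {α : Type*} {k : ℕ} (a : Fin (k+1) → α) :
    rm1 (Fin.last k).1 a = Fin.init a := by
  rw [rm1_eq, Fin.removeNth_last]

end Indices

section Morphism

variable {F : Type*} [Field F]
variable {A M : Type*} [AddCommGroup A] [Module F A] [AddCommGroup M] [Module F M]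
variable {L : LCA F A}

/-- A finitely supported coefficient function as a polynomial. -/
noncomputable def toP {k : ℕ} (f : (Fin k → ℕ) → M) (h : (Function.support f).Finite) :
    Poly k M := Finsupp.ofSupportFinite f h

@[simp] lemma toP_apply {k : ℕ} (f : (Fin k → ℕ) → M) (h : (Function.support f).Finite) (ν) :
    toP f h ν = f ν := rfl

/-- The action of `a` with polynomial values. -/
noncomputable def actP (R : LCAMod F L M) (a : A) : M →ₗ[F] (ℕ →₀ M) where
  toFun m := Finsupp.ofSupportFinite (R.act a m) (R.act_fin a m)
  map_add' m m' := by ext n; simp [Finsupp.ofSupportFinite_coe]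
  map_smul' c m := by ext n; simp [Finsupp.ofSupportFinite_coe]

@[simp] lemma actP_apply (R : LCAMod F L M) (a : A) (m : M) (n : ℕ) :
    actP R a m n = R.act a m n := rfl

lemma actP_sesq (R : LCAMod F L M) (a : A) (m : M) (n : ℕ) :
    actP R a (R.D m) n = R.D (actP R a m n) + (if n = 0 then 0 else actP R a m (n-1)) :=
  R.sesq_right a m n

/-- The bracket with polynomial values. -/
noncomputable def brP (L : LCA F A) (a b : A) : ℕ →₀ A :=
  Finsupp.ofSupportFinite (L.br a b) (L.br_fin a b)

lemma brP_apply (L : LCA F A) (a b : A) (n : ℕ) : brP L a b n = L.br a b n := rfl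

lemma psi_eq (R : LCAMod F L M) {k : ℕ} (γ : (Fin (k+1) → A) → (Fin (k+1) → ℕ) → M)
    (a : Fin (k+1) → A) (h : (Function.support (γ a)).Finite) :
    psiRaw R γ a = pS R.D (toP (γ a) h) := by
  funext ν
  exact congrFun (substDag_eq R.D (toP (γ a) h) _ (fun ρ n => rfl)) ν

lemma pS_pX_pow {K : ℕ} (D : M →ₗ[F] M) (r : Fin K) (p : ℕ) (u : Poly (K+1) M) :
    pS D ((pX F r.castSucc ^ p) u) = (pX F r ^ p) (pS D u) := by
  induction p with
  | zero => simp
  | succ p ih => rw [pow_succ', pow_succ', Module.End.mul_apply, pS_pX, ih, Module.End.mul_apply]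

section fixed

variable (R : LCAMod F L M) {k : ℕ} {γ : (Fin (k+1) → A) → (Fin (k+1) → ℕ) → M}
  (hγ : IsGamma R (k+1) γ)

/-- The polynomial of a pair term. -/
noncomputable def pQ (a : Fin (k+2) → A) (i j : Fin (k+2)) : Poly (k+2) M :=
  if h : i < j then
    ∑ p ∈ (brP L (a i) (a j)).support, (pX F i ^ p) (pJ F j (ipre i j h)
      (toP (γ (Fin.snoc (α := fun _ => A) (rm2 i.1 j.1 a) (L.br (a i) (a j) p))) (hγ.fin _)))
  else 0

lemma gamma_snoc_zero (hγ : IsGamma R (k+1) γ) (x : Fin k → A) : γ (Fin.snoc (α := fun _ => A) x 0) = 0 := by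
  have := hγ.map_smul (Fin.snoc (α := fun _ => A) x 0) (Fin.last k) 0 0
  rw [zero_smul, zero_smul, Fin.update_snoc_last] at this
  exact this

lemma toP_notMem (a : Fin (k+2) → A) (i j : Fin (k+2)) (p : ℕ)
    (hp : p ∉ (brP L (a i) (a j)).support) (x : Fin k → A) :
    toP (γ (Fin.snoc (α := fun _ => A) x (L.br (a i) (a j) p))) (hγ.fin _) = 0 := by
  ext ν
  rw [Finsupp.notMem_support_iff, brP_apply] at hp
  simp only [hp, toP_apply]
  rw [gamma_snoc_zero R hγ]
  rfl

lemma pQ_apply (a : Fin (k+2) → A) (i j : Fin (k+2)) (h : i < j) (ν : Fin (k+2) → ℕ) :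
    pQ R hγ a i j ν = ∑ p ∈ Finset.range (ν i + 1),
            ((((ν i - p) + ν j).choose (ν i - p) : F)) •
              γ (Fin.snoc (α := fun _ => A) (rm2 i.1 j.1 a) (L.br (a i) (a j) p))
                (Fin.snoc (α := fun _ => ℕ) (rm2 i.1 j.1 ν) ((ν i - p) + ν j)) := by
  rw [pQ, dif_pos h, sum_pX_pow_apply]
  · refine Finset.sum_congr rfl (fun p _ => ?_)
    rw [pJ_apply, succAbove_ipre, Function.update_self, Function.update_of_ne h.ne', toP_apply,
      rm2_eq i j h ν]
    congr 3
    have := removeNth_update_succAbove j (ipre i j h) ν (ν i - p)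
    rw [succAbove_ipre] at this
    rw [this, removeNth_update_self]
  · intro p hp
    rw [toP_notMem R hγ a i j p hp, map_zero]

/-- The polynomial of `δγ`. -/
noncomputable def deltaP (a : Fin (k+2) → A) : Poly (k+2) M :=
  (∑ i : Fin (k+2), ((-1 : F)^i.1) •
      pA (actP R (a i)) i (toP (γ (rm1 i.1 a)) (hγ.fin _)))
  + ∑ i : Fin (k+2), ∑ j : Fin (k+2), ((-1 : F)^(k + i.1 + j.1)) • pQ R hγ a i j

lemma deltaP_apply (a : Fin (k+2) → A) (ν : Fin (k+2) → ℕ) :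
    deltaRaw L R γ a ν = deltaP R hγ a ν := by
  rw [deltaRaw, deltaP, Finsupp.add_apply]
  congr 1
  · rw [Finsupp.finsetSum_apply]
    refine Finset.sum_congr rfl (fun i _ => ?_)
    rw [Finsupp.smul_apply, pA_apply, toP_apply, actP_apply, rm1_eq i ν]
  · simp only [deltaPair, Finsupp.finsetSum_apply]
    refine Finset.sum_congr rfl (fun i _ => Finset.sum_congr rfl (fun j _ => ?_))
    split_ifs with h
    · rw [Finsupp.smul_apply, pQ_apply R hγ a i j h]
    · rw [pQ, dif_neg h]; simp

lemma psi_delta_eq (a : Fin (k+2) → A) :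
    psiRaw R (deltaRaw L R γ) a = pS R.D (deltaP R hγ a) := by
  funext ν
  exact congrFun (substDag_eq R.D (deltaP R hγ a) _ (fun ρ n => deltaP_apply R hγ a _)) ν

lemma pairD (a : Fin (k+2) → A) (i : Fin (k+1)) (ν : Fin (k+1) → ℕ) :
    pS R.D (pQ R hγ a i.castSucc (Fin.last (k+1))) ν =
      psiRaw R γ (Fin.snoc (α := fun _ => A) (rm1 i.1 (Fin.init a))
        (L.br (a i.castSucc) (a (Fin.last (k+1))) (ν i))) (rm1 i.1 ν) := by
  have hi : ipre i.castSucc (Fin.last (k+1)) (Fin.castSucc_lt_last i) = i := rfl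
  rw [pQ, dif_pos (Fin.castSucc_lt_last i), map_sum]
  simp only [pS_pX_pow, hi, termD]
  rw [sum_pX_pow_apply]
  · rw [Finset.sum_eq_single_of_mem (ν i) (by simp)]
    · rw [pI_apply, if_pos (by simp), removeNth_update_self, psi_eq R γ _ (hγ.fin _), rm1_eq i ν]
      congr 3
      simp only [rm2_last]
    · intro p hp hne
      rw [pI_apply, if_neg]
      rw [Finset.mem_range] at hp
      rw [Function.update_self]
      omega
  · intro p hp
    rw [toP_notMem R hγ a _ _ p hp, map_zero, map_zero]

end fixed

lemma pairC (R : LCAMod F L M) {k : ℕ} {γ : (Fin (k+1) → A) → (Fin (k+1) → ℕ) → M}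
    (hγ : IsGamma R (k+1) γ) (a : Fin (k+2) → A) (ν : Fin (k+1) → ℕ) :
    dPair L R (psiRaw R γ) a ν = ∑ i : Fin (k+1), ∑ j : Fin (k+1),
      ((-1 : F)^(k + i.1 + j.1)) • pS R.D (pQ R hγ a i.castSucc j.castSucc) ν := by
  cases k with
  | zero =>
    simp only [dPair]
    simp [pQ]
  | succ s =>
    simp only [dPair]
    refine Finset.sum_congr rfl (fun i _ => Finset.sum_congr rfl (fun j _ => ?_))
    split_ifs with h
    · rw [show s + 1 + i.1 + j.1 = s + i.1 + j.1 + 1 by omega]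
      congr 1
      have hi : ipre i.castSucc j.castSucc h = (ipre i j h).castSucc := rfl
      have h' : i.castSucc < j.castSucc := h
      rw [pQ, dif_pos h', map_sum]
      simp only [pS_pX_pow, hi, termC]
      rw [sum_pX_pow_apply]
      · refine Finset.sum_congr rfl (fun p _ => ?_)
        refine congrFun (substDag_eq R.D _ _ (fun ρ n => ?_)) _
        rw [pI_apply, pI_apply, removeNth_castSucc_snoc, removeNth_castSucc_snoc]
        simp only [Fin.snoc_castSucc]
        have h2 : j.removeNth ρ (ipre i j h) = ρ i := by
          rw [Fin.removeNth, succAbove_ipre]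
        rw [h2, psi_eq R γ _ (hγ.fin _), rm2_eq i j h ρ]
        simp only [rm2_castSucc i j h a]
        by_cases h3 : ρ i = 0 <;> by_cases h4 : ρ j = 0 <;> simp [h3, h4]
      · intro p hp
        rw [toP_notMem R hγ a _ _ p hp]
        simp only [map_zero]
    · rw [pQ, dif_neg (by simpa using h)]; simp

theorem psi_delta (R : LCAMod F L M) {k : ℕ} {γ : (Fin (k+1) → A) → (Fin (k+1) → ℕ) → M}
    (hγ : IsGamma R (k+1) γ) : psiRaw R (deltaRaw L R γ) = dRaw L R (psiRaw R γ) := by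
  funext a ν
  rw [psi_delta_eq R hγ, dRaw, pairC R hγ, deltaP]
  simp only [map_add, map_sum, map_smul]
  rw [Fin.sum_univ_castSucc (n := k+1)]
  rw [Fin.sum_univ_castSucc (n := k+1) (f := fun i => ∑ j : Fin (k+2), _)]
  simp only [Fin.sum_univ_castSucc (n := k+1)]
  have hQ0 : ∀ j, pQ R hγ a (Fin.last (k+1)) j = 0 := by
    intro j
    rw [pQ, dif_neg (not_lt.2 (Fin.le_last j))]
  simp only [hQ0, map_zero, smul_zero, Finset.sum_const_zero, add_zero]
  simp only [Finsupp.add_apply, Finsupp.finsetSum_apply, Finsupp.smul_apply,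
    Finset.sum_add_distrib]
  have eA : ∀ i : Fin (k+1), (pS R.D (pA (actP R (a i.castSucc)) i.castSucc
      (toP (γ (rm1 i.castSucc.1 a)) (hγ.fin _)))) ν =
      R.act (a i.castSucc) (psiRaw R γ (rm1 i.1 a) (rm1 i.1 ν)) (ν i) := by
    intro i
    rw [termA R.D _ (actP_sesq R _), pA_apply, psi_eq R γ _ (hγ.fin _), rm1_eq i ν, actP_apply]
    rfl
  have eB : (pS R.D (pA (actP R (a (Fin.last (k+1)))) (Fin.last (k+1))
      (toP (γ (rm1 (Fin.last (k+1)).1 a)) (hγ.fin _)))) ν =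
      substDag R.D
        (fun ρ n =>
          if ρ (Fin.last k) = 0 then
            R.act (a (Fin.last (k+1))) (psiRaw R γ (Fin.init a) (Fin.init ρ)) n
          else 0) ν := by
    rw [termB R.D _ (actP_sesq R _)]
    symm
    refine congrFun (substDag_eq R.D _ _ (fun ρ n => ?_)) _
    rw [pA_apply, pI_apply, Fin.removeNth_last, Fin.removeNth_last, Fin.init_snoc, Fin.snoc_last,
      psi_eq R γ _ (hγ.fin _)]
    simp only [rm1_last]
    split_ifs <;> simp
  simp only [eA, pairD]
  rw [eB]
  have hs : ∀ i : ℕ, ((-1 : F)^(k + i + (k+1))) = (-1 : F)^(i+1) := by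
    intro i
    rw [show k + i + (k+1) = 2 * k + (i+1) by omega, pow_add, pow_mul]; simp
  simp only [Fin.val_last, Fin.val_castSucc, hs]
  abel

theorem psi_delta_zero (R : LCAMod F L M) (m : M) :
    psiRaw R (deltaRaw L R (fun (_ : Fin 0 → A) (_ : Fin 0 → ℕ) => m)) = dZero R m := by
  funext a ν
  simp only [psiRaw, substDag, dZero, deltaRaw, deltaPair]
  have : Finset.Iic ν = {ν} := by
    ext x; simp [Subsingleton.elim x ν]
  rw [this, Finset.sum_singleton]
  refine finsum_congr (fun s => ?_)
  have h : (Fin.snoc (α := fun _ => ℕ) ν s : Fin 1 → ℕ) 0 = s := rfl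
  simp [wt, mnom, Nat.div_self (Nat.factorial_pos s), h]

end Morphism

end LCC

namespace LCC

section Perm

variable {F : Type*} [Field F] {M : Type*} [AddCommGroup M] [Module F M]

variable (F) in
/-- Permutation of the variables. -/
noncomputable def pPerm {K : ℕ} (σ : Equiv.Perm (Fin K)) : Poly K M →ₗ[F] Poly K M :=
  Finsupp.lmapDomain M F (fun ν => ν ∘ σ.symm)

lemma pPerm_apply {K : ℕ} (σ : Equiv.Perm (Fin K)) (v : Poly K M) (ν : Fin K → ℕ) :
    pPerm F σ v ν = v (ν ∘ σ) := by
  have h : ν = (fun ν : Fin K → ℕ => ν ∘ σ.symm) (ν ∘ σ) := by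
    funext r; simp
  conv_lhs => rw [h]
  rw [pPerm, Finsupp.lmapDomain_apply, Finsupp.mapDomain_apply]
  intro a b hab
  funext r
  simpa using congrFun hab (σ r)

lemma pPerm_pX {K : ℕ} (σ : Equiv.Perm (Fin K)) (r : Fin K) (v : Poly K M) :
    pPerm F σ (pX F r v) = pX F (σ r) (pPerm F σ v) := by
  ext ν
  simp only [pPerm_apply, pX_apply, Function.update_comp_eq_of_injective _ σ.injective,
    Function.comp_apply]

lemma pPerm_pT {K : ℕ} (D : M →ₗ[F] M) (σ : Equiv.Perm (Fin K)) (v : Poly K M) :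
    pPerm F σ (pT D v) = pT D (pPerm F σ v) := by
  have hD : pPerm F σ (pD D v) = pD D (pPerm F σ v) := by
    ext ν; simp only [pPerm_apply, pD_apply]
  simp only [pT, LinearMap.sub_apply, LinearMap.neg_apply, LinearMap.sum_apply, map_sub, map_neg,
    map_sum, hD, pPerm_pX]
  rw [Equiv.sum_comp σ (fun r => pX F r (pPerm F σ v))]

lemma pPerm_mul {K : ℕ} (σ τ : Equiv.Perm (Fin K)) (v : Poly K M) :
    pPerm F τ (pPerm F σ v) = pPerm F (τ * σ) v := by
  ext ν
  simp only [pPerm_apply]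
  rfl

lemma pT_injective {K : ℕ} (D : M →ₗ[F] M) (v w : Poly (K+1) M) (h : pT D v = pT D w) : v = w := by
  have := pT_inj D (v - w) (by rw [map_sub, h, sub_self])
  exact sub_eq_zero.1 this

end Perm

section Gamma

variable {F : Type*} [Field F]
variable {A M : Type*} [AddCommGroup A] [Module F A] [AddCommGroup M] [Module F M]
variable {L : LCA F A}

/-- Polynomial version of `IsGamma` without skew-symmetry. -/
structure IsGP0 (L : LCA F A) {k : ℕ} (G : (Fin k → A) → Poly k M) : Prop where
  map_add : ∀ (a : Fin k → A) (i : Fin k) (x y : A),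
    G (Function.update a i (x + y)) = G (Function.update a i x) + G (Function.update a i y)
  map_smul : ∀ (a : Fin k → A) (i : Fin k) (r : F) (x : A),
    G (Function.update a i (r • x)) = r • G (Function.update a i x)
  sesq : ∀ (a : Fin k → A) (i : Fin k) (x : A),
    G (Function.update a i (L.D x)) = - pX F i (G (Function.update a i x))

/-- Polynomial version of `IsGamma`. -/
structure IsGP (L : LCA F A) {k : ℕ} (G : (Fin k → A) → Poly k M) : Prop extends IsGP0 L G where
  skew : ∀ (a : Fin k → A) (σ : Equiv.Perm (Fin k)),
    pPerm F σ (G (a ∘ σ)) = ((Equiv.Perm.sign σ : ℤˣ) : ℤ) • G a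

lemma IsGP.isGamma (R : LCAMod F L M) {k : ℕ} {G : (Fin k → A) → Poly k M} (h : IsGP L G) :
    IsGamma R k (fun a => ⇑(G a)) where
  map_add a i x y := by rw [h.map_add]; rfl
  map_smul a i r x := by rw [h.map_smul]; rfl
  fin a := (G a).hasFiniteSupport
  sesq a i x ν := by
    rw [h.sesq, Finsupp.neg_apply, pX_apply]
    split_ifs <;> simp
  skew a ν σ := by
    have := DFunLike.congr_fun (h.skew a σ) ν
    rw [pPerm_apply] at this
    exact this

lemma IsGamma.isGP {R : LCAMod F L M} {k : ℕ} {γ : (Fin k → A) → (Fin k → ℕ) → M}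
    (h : IsGamma R k γ) : IsGP L (fun a => toP (γ a) (h.fin a)) where
  map_add a i x y := by
    ext ν
    simp only [toP_apply, h.map_add]; rfl
  map_smul a i r x := by
    ext ν
    simp only [toP_apply, h.map_smul]; rfl
  sesq a i x := by
    ext ν
    rw [Finsupp.neg_apply, pX_apply, toP_apply, h.sesq]
    split_ifs <;> simp
  skew a σ := by
    ext ν
    rw [pPerm_apply]
    exact h.skew a ν σ

theorem psi_injective (R : LCAMod F L M) {k : ℕ} {γ θ : (Fin (k+1) → A) → (Fin (k+1) → ℕ) → M}
    (hγ : IsGamma R (k+1) γ) (hθ : IsGamma R (k+1) θ) (h : psiRaw R γ = psiRaw R θ) :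
    ∃ η, IsGamma R (k+1) η ∧ γ - θ = GammaD R η := by
  have gγ := hγ.isGP
  have gθ := hθ.isGP
  have hex : ∀ a, ∃ w, toP (γ a) (hγ.fin a) - toP (θ a) (hθ.fin a) = pT R.D w := by
    intro a
    apply exists_pT_of_pS
    have := congrFun h a
    rw [psi_eq R γ a (hγ.fin a), psi_eq R θ a (hθ.fin a)] at this
    rw [map_sub, DFunLike.coe_injective this, sub_self]
  choose w hw using hex
  have gw : IsGP L w := by
    refine ⟨⟨?_, ?_, ?_⟩, ?_⟩
    · intro a i x y
      apply pT_injective R.D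
      rw [map_add, ← hw, ← hw, ← hw, gγ.map_add, gθ.map_add]
      abel
    · intro a i r x
      apply pT_injective R.D
      rw [map_smul, ← hw, ← hw, gγ.map_smul, gθ.map_smul, smul_sub]
    · intro a i x
      apply pT_injective R.D
      rw [map_neg, ← pX_pT, ← hw, ← hw, gγ.sesq, gθ.sesq, map_sub]
      abel
    · intro a σ
      apply pT_injective R.D
      rw [map_zsmul, ← pPerm_pT, ← hw, ← hw, map_sub, gγ.skew, gθ.skew, smul_sub]
  have gw' : IsGP L (fun a => - w a) := by
    refine ⟨⟨?_, ?_, ?_⟩, ?_⟩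
    · intro a i x y
      simp only [gw.map_add]; abel
    · intro a i r x
      simp only [gw.map_smul, smul_neg]
    · intro a i x
      simp only [gw.sesq, map_neg]
    · intro a σ
      simp only [map_neg, gw.skew, smul_neg]
  refine ⟨_, gw'.isGamma R, ?_⟩
  funext a ν
  have := DFunLike.congr_fun (hw a) ν
  change γ a ν - θ a ν = _
  change γ a ν - θ a ν = _ at this
  rw [this, GammaD, ← neg_neg (w a), map_neg, Finsupp.neg_apply, pT_apply]
  simp only [neg_neg]
  abel

end Gamma

section Surj

variable {F : Type*} [Field F]
variable {A M : Type*} [AddCommGroup A] [Module F A] [AddCommGroup M] [Module F M]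
variable {L : LCA F A}

/-- Torsion as a submodule. -/
def torSub (L : LCA F A) : Submodule F A where
  carrier := {x | IsTor L x}
  zero_mem' := ⟨1, one_ne_zero, by simp⟩
  add_mem' := by
    rintro x y ⟨p, hp, hpx⟩ ⟨q, hq, hqy⟩
    refine ⟨p * q, mul_ne_zero hp hq, ?_⟩
    rw [map_add, map_mul, Module.End.mul_apply, Module.End.mul_apply, hqy, map_zero, add_zero,
      ← Module.End.mul_apply, ← map_mul, mul_comm, map_mul, Module.End.mul_apply, hpx, map_zero]
  smul_mem' := by
    rintro c x ⟨p, hp, hpx⟩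
    exact ⟨p, hp, by rw [map_smul, hpx, smul_zero]⟩

lemma tor_D {x : A} (h : IsTor L x) : IsTor L (L.D x) := by
  obtain ⟨p, hp, hpx⟩ := h
  refine ⟨p, hp, ?_⟩
  have : Polynomial.aeval L.D p (L.D x) = L.D (Polynomial.aeval L.D p x) := by
    have h2 : Polynomial.aeval L.D (p * Polynomial.X) = Polynomial.aeval L.D (Polynomial.X * p) := by
      rw [mul_comm]
    have := LinearMap.congr_fun h2 x
    simpa using this
  rw [this, hpx, map_zero]

/-- The projection on the free part. -/
lemma exists_proj (h : Decomposes L) : ∃ π : A →ₗ[F] (ℕ →₀ A),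
    (∀ a, π (L.D a) = Finsupp.mapDomain (· + 1) (π a)) ∧
    (∀ a, IsTor L (a - Finsupp.lsum F (fun n => L.D ^ n) (π a))) := by
  obtain ⟨U, hU⟩ := h
  let ev : (ℕ →₀ U) →ₗ[F] A := Finsupp.lsum F (fun n => (L.D ^ n) ∘ₗ U.subtype)
  let e : (torSub L × (ℕ →₀ U)) →ₗ[F] A := (torSub L).subtype.coprod ev
  have he : Function.Bijective e := by
    exact hU
  let E := LinearEquiv.ofBijective e he
  let inc : (ℕ →₀ U) →ₗ[F] (ℕ →₀ A) := Finsupp.mapRange.linearMap U.subtype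
  have hev : ∀ f, Finsupp.lsum F (fun n => L.D ^ n) (inc f) = ev f := by
    intro f
    induction f using Finsupp.induction_linear with
    | zero => simp
    | add f g hf hg => simp only [map_add, hf, hg]
    | single n u => simp [inc, ev]
  have hsh : ∀ f : ℕ →₀ U, L.D (ev f) = ev (Finsupp.mapDomain (· + 1) f) := by
    intro f
    induction f using Finsupp.induction_linear with
    | zero => simp
    | add f g hf hg => simp only [map_add, hf, hg, Finsupp.mapDomain_add]
    | single n u => simp [ev, Finsupp.mapDomain_single, pow_succ']
  have hinc : ∀ f : ℕ →₀ U, inc (Finsupp.mapDomain (· + 1) f) =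
      Finsupp.mapDomain (· + 1) (inc f) := by
    intro f
    induction f using Finsupp.induction_linear with
    | zero => simp
    | add f g hf hg => simp only [map_add, hf, hg, Finsupp.mapDomain_add]
    | single n u => simp [inc, Finsupp.mapDomain_single]
  refine ⟨inc ∘ₗ LinearMap.snd F _ _ ∘ₗ E.symm.toLinearMap, ?_, ?_⟩
  · intro a
    obtain ⟨⟨t, f⟩, rfl⟩ := E.surjective a
    have h1 : L.D (E (t, f)) = E (⟨L.D t, tor_D t.2⟩, Finsupp.mapDomain (· + 1) f) := by
      change L.D ((t : A) + ev f) = L.D t + ev _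
      rw [map_add, hsh]
      rfl
    rw [h1]
    simp only [LinearMap.comp_apply, LinearEquiv.coe_coe, LinearEquiv.symm_apply_apply,
      LinearMap.snd_apply]
    exact hinc f
  · intro a
    obtain ⟨⟨t, f⟩, rfl⟩ := E.surjective a
    simp only [LinearMap.comp_apply, LinearEquiv.coe_coe, LinearEquiv.symm_apply_apply,
      LinearMap.snd_apply]
    rw [hev]
    have : E (t, f) - ev f = t := by
      change ((t : A) + ev f) - ev f = t
      abel
    rw [this]
    exact t.2

/-- Polynomial version of `IsCBr`. -/
structure IsCP (L : LCA F A) (D : M →ₗ[F] M) {k : ℕ} (C : (Fin (k+1) → A) → Poly k M) : Prop where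
  map_add : ∀ (a : Fin (k+1) → A) (i : Fin (k+1)) (x y : A),
    C (Function.update a i (x + y)) = C (Function.update a i x) + C (Function.update a i y)
  map_smul : ∀ (a : Fin (k+1) → A) (i : Fin (k+1)) (r : F) (x : A),
    C (Function.update a i (r • x)) = r • C (Function.update a i x)
  sesq₁ : ∀ (a : Fin (k+1) → A) (i : Fin k) (x : A),
    C (Function.update a i.castSucc (L.D x)) = - pX F i (C (Function.update a i.castSucc x))
  sesq₂ : ∀ (a : Fin (k+1) → A) (x : A),
    C (Function.update a (Fin.last k) (L.D x)) = - pT D (C (Function.update a (Fin.last k) x))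
  skew : ∀ (a : Fin (k+1) → A) (σ : Equiv.Perm (Fin (k+1))),
    C a = ((Equiv.Perm.sign σ : ℤˣ) : ℤ) • pS D (pPerm F σ (pI F (Fin.last k) (C (a ∘ σ))))

lemma IsCBr.isCP {R : LCAMod F L M} {k : ℕ} {c : (Fin (k+1) → A) → (Fin k → ℕ) → M}
    (h : IsCBr R k c) : IsCP L R.D (fun a => toP (c a) (h.fin a)) where
  map_add a i x y := by
    ext ν
    simp only [toP_apply, h.map_add]; rfl
  map_smul a i r x := by
    ext ν
    simp only [toP_apply, h.map_smul]; rfl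
  sesq₁ a i x := by
    ext ν
    rw [Finsupp.neg_apply, pX_apply, toP_apply, h.sesq₁]
    split_ifs <;> simp
  sesq₂ a x := by
    ext ν
    rw [Finsupp.neg_apply, pT_apply, toP_apply, h.sesq₂]
    simp only [toP_apply]
    abel
  skew a σ := by
    ext ν
    rw [toP_apply, h.skew a ν σ]
    change _ = ((Equiv.Perm.sign σ : ℤˣ) : ℤ) • (pS R.D _) ν
    congr 1
    refine congrFun (substDag_eq R.D _ _ (fun ρ n => ?_)) _
    rw [pPerm_apply, pI_apply, Fin.removeNth_last]
    rfl

section lift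

variable {D : M →ₗ[F] M} {k : ℕ} {C : (Fin (k+1) → A) → Poly k M} (hC : IsCP L D C)

/-- `C` as a linear map in the last argument. -/
def lastLin (a : Fin (k+1) → A) : A →ₗ[F] Poly k M where
  toFun u := C (Function.update a (Fin.last k) u)
  map_add' x y := hC.map_add a _ x y
  map_smul' r x := hC.map_smul a _ r x

lemma lastLin_apply (a : Fin (k+1) → A) (u : A) :
    lastLin hC a u = C (Function.update a (Fin.last k) u) := rfl

lemma lastLin_upd (a : Fin (k+1) → A) (x : A) :
    lastLin hC (Function.update a (Fin.last k) x) = lastLin hC a := by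
  ext1 u
  simp only [lastLin_apply, Function.update_idem]

/-- The extension by sesquilinearity in the last argument. -/
noncomputable def liftLin (l : A →ₗ[F] Poly k M) : (ℕ →₀ A) →ₗ[F] Poly (k+1) M :=
  Finsupp.lsum F (fun n => ((- pX F (Fin.last k)) ^ n) ∘ₗ pI F (Fin.last k) ∘ₗ l)

lemma liftLin_single (l : A →ₗ[F] Poly k M) (n : ℕ) (u : A) :
    liftLin l (Finsupp.single n u) =
      ((- pX F (Fin.last k)) ^ n : Poly (k+1) M →ₗ[F] Poly (k+1) M) (pI F (Fin.last k) (l u)) := by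
  simp [liftLin]

lemma liftLin_shift (l : A →ₗ[F] Poly k M) (f : ℕ →₀ A) :
    liftLin l (Finsupp.mapDomain (· + 1) f) = - pX F (Fin.last k) (liftLin l f) := by
  induction f using Finsupp.induction_linear with
  | zero => simp
  | add f g hf hg => simp only [map_add, hf, hg, Finsupp.mapDomain_add]; abel
  | single n u =>
    rw [Finsupp.mapDomain_single, liftLin_single, liftLin_single, pow_succ']
    rfl

lemma liftLin_add (l l' : A →ₗ[F] Poly k M) (f : ℕ →₀ A) :
    liftLin (l + l') f = liftLin l f + liftLin l' f := by
  induction f using Finsupp.induction_linear with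
  | zero => simp
  | add f g hf hg => simp only [map_add, hf, hg]; abel
  | single n u => simp only [liftLin_single, LinearMap.add_apply, map_add]

lemma liftLin_smul (r : F) (l : A →ₗ[F] Poly k M) (f : ℕ →₀ A) :
    liftLin (r • l) f = r • liftLin l f := by
  induction f using Finsupp.induction_linear with
  | zero => simp
  | add f g hf hg => simp only [map_add, hf, hg, smul_add]
  | single n u => simp only [liftLin_single, LinearMap.smul_apply, map_smul]

lemma negX_pow_comm (i : Fin (k+1)) (n : ℕ) (v : Poly (k+1) M) :
    ((- pX F (Fin.last k)) ^ n : Poly (k+1) M →ₗ[F] Poly (k+1) M) (pX F i v) =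
      pX F i (((- pX F (Fin.last k)) ^ n : Poly (k+1) M →ₗ[F] Poly (k+1) M) v) := by
  induction n with
  | zero => simp
  | succ n ih =>
    rw [pow_succ', Module.End.mul_apply, ih, Module.End.mul_apply, LinearMap.neg_apply,
      LinearMap.neg_apply, map_neg, pX_comm]

lemma liftLin_sesq (i : Fin k) (l : A →ₗ[F] Poly k M) (f : ℕ →₀ A) :
    liftLin (-(pX F i ∘ₗ l)) f = - pX F i.castSucc (liftLin l f) := by
  induction f using Finsupp.induction_linear with
  | zero => simp
  | add f g hf hg => simp only [map_add, hf, hg]; abel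
  | single n u =>
    simp only [liftLin_single, LinearMap.neg_apply, LinearMap.comp_apply, map_neg, pI_pX,
      Fin.succAbove_last_apply, negX_pow_comm]

lemma pS_liftLin (D : M →ₗ[F] M) (l : A →ₗ[F] Poly k M) (hl : ∀ u, l (L.D u) = - pT D (l u))
    (f : ℕ →₀ A) : pS D (liftLin l f) = l (Finsupp.lsum F (fun n => L.D ^ n) f) := by
  induction f using Finsupp.induction_linear with
  | zero => simp
  | add f g hf hg => simp only [map_add, hf, hg]
  | single n u =>
    rw [liftLin_single, Finsupp.lsum_single]
    induction n with
    | zero => simp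
    | succ n ih =>
      rw [pow_succ', pow_succ', Module.End.mul_apply, Module.End.mul_apply, hl, ← ih,
        LinearMap.neg_apply, map_neg, pS_pX_last]

/-- The non-skew-symmetric lift. -/
noncomputable def cLift (π : A →ₗ[F] (ℕ →₀ A)) (a : Fin (k+1) → A) : Poly (k+1) M :=
  liftLin (lastLin hC a) (π (a (Fin.last k)))

lemma cLift_isGP0 (π : A →ₗ[F] (ℕ →₀ A))
    (hπ : ∀ a, π (L.D a) = Finsupp.mapDomain (· + 1) (π a)) : IsGP0 L (cLift hC π) := by
  have hne : ∀ i : Fin k, Fin.last k ≠ i.castSucc := fun i => (Fin.castSucc_lt_last i).ne'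
  refine ⟨?_, ?_, ?_⟩
  · intro a i x y
    refine Fin.lastCases ?_ (fun i => ?_) i
    · simp only [cLift, lastLin_upd, Function.update_self, map_add]
    · simp only [cLift, Function.update_of_ne (hne i)]
      rw [← liftLin_add]
      refine congrArg (fun l => liftLin l _) (LinearMap.ext fun u => ?_)
      simp only [lastLin_apply, LinearMap.add_apply, Function.update_comm (hne i).symm]
      exact hC.map_add _ _ _ _
  · intro a i r x
    refine Fin.lastCases ?_ (fun i => ?_) i
    · simp only [cLift, lastLin_upd, Function.update_self, map_smul]
    · simp only [cLift, Function.update_of_ne (hne i)]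
      rw [← liftLin_smul]
      refine congrArg (fun l => liftLin l _) (LinearMap.ext fun u => ?_)
      simp only [lastLin_apply, LinearMap.smul_apply, Function.update_comm (hne i).symm]
      exact hC.map_smul _ _ _ _
  · intro a i x
    refine Fin.lastCases ?_ (fun i => ?_) i
    · simp only [cLift, lastLin_upd, Function.update_self, hπ, liftLin_shift]
    · simp only [cLift, Function.update_of_ne (hne i)]
      rw [← liftLin_sesq]
      refine congrArg (fun l => liftLin l _) (LinearMap.ext fun u => ?_)
      simp only [lastLin_apply, LinearMap.neg_apply, LinearMap.comp_apply,
        Function.update_comm (hne i).symm]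
      exact hC.sesq₁ _ _ _

lemma pS_cLift (π : A →ₗ[F] (ℕ →₀ A))
    (hπ : ∀ a, IsTor L (a - Finsupp.lsum F (fun n => L.D ^ n) (π a)))
    (hv : ∀ a, (∃ i, IsTor L (a i)) → C a = 0) (a : Fin (k+1) → A) :
    pS D (cLift hC π a) = C a := by
  rw [cLift, pS_liftLin (L := L) D _ (fun u => hC.sesq₂ a u)]
  have h1 : lastLin hC a (a (Fin.last k)) = C a := by
    rw [lastLin_apply, Function.update_eq_self]
  have h2 : lastLin hC a (a (Fin.last k) -
      Finsupp.lsum F (fun n => L.D ^ n) (π (a (Fin.last k)))) = 0 := by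
    rw [lastLin_apply]
    apply hv
    exact ⟨Fin.last k, by simpa using hπ _⟩
  rw [map_sub, sub_eq_zero] at h2
  rw [← h2, h1]

end lift

/-- Antisymmetrization. -/
noncomputable def antiSym {k : ℕ} (G : (Fin k → A) → Poly k M) (F : Type*) [Field F] [Module F M]
    (a : Fin k → A) : Poly k M :=
  ((k.factorial : F)⁻¹) • ∑ σ : Equiv.Perm (Fin k),
    ((Equiv.Perm.sign σ : ℤˣ) : ℤ) • pPerm F σ (G (a ∘ σ))

lemma antiSym_isGP {k : ℕ} {G : (Fin k → A) → Poly k M} (hG : IsGP0 L G) :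
    IsGP L (antiSym G F) := by
  refine ⟨⟨?_, ?_, ?_⟩, ?_⟩
  · intro a i x y
    simp only [antiSym, Function.update_comp_equiv, hG.map_add, map_add, smul_add,
      Finset.sum_add_distrib]
  · intro a i r x
    simp only [antiSym, Function.update_comp_equiv, hG.map_smul, map_smul]
    rw [smul_comm r]
    congr 1
    rw [Finset.smul_sum]
    refine Finset.sum_congr rfl (fun σ _ => ?_)
    rw [smul_comm]
  · intro a i x
    simp only [antiSym, Function.update_comp_equiv, hG.sesq, map_neg, pPerm_pX,
      Equiv.apply_symm_apply, smul_neg, Finset.sum_neg_distrib, map_smul, map_sum, map_zsmul]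
  · intro a τ
    simp only [antiSym, map_smul, map_sum, map_zsmul, pPerm_mul]
    rw [smul_comm]
    congr 1
    rw [Finset.smul_sum]
    refine Fintype.sum_equiv (Equiv.mulLeft τ) _ _ (fun σ => ?_)
    rw [smul_smul]
    simp only [Equiv.coe_mulLeft, Equiv.Perm.sign_mul, Units.val_mul]
    rw [← mul_assoc, ← Units.val_mul, Int.units_mul_self]
    simp only [Units.val_one, one_mul]
    rfl

theorem psi_surjective [CharZero F] (R : LCAMod F L M) (hdec : Decomposes L) {k : ℕ}
    {c : (Fin (k+1) → A) → (Fin k → ℕ) → M} (hc : IsCBr R k c) (hv : VanishOnTorsion L c) :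
    ∃ γ, IsGamma R (k+1) γ ∧ psiRaw R γ = c := by
  obtain ⟨π, hπ1, hπ2⟩ := exists_proj hdec
  have hC := hc.isCP
  have hv' : ∀ a, (∃ i, IsTor L (a i)) → toP (c a) (hc.fin a) = 0 := by
    intro a h
    ext ν
    exact hv a ν h
  have hG := antiSym_isGP (F := F) (cLift_isGP0 hC π hπ1)
  refine ⟨_, hG.isGamma R, ?_⟩
  funext a
  rw [psi_eq R _ a ((hG.isGamma R).fin a)]
  have h0 : toP (⇑(antiSym (cLift hC π) F a)) ((hG.isGamma R).fin a) =
    antiSym (cLift hC π) F a := by ext ν; rfl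
  rw [h0]
  suffices h : pS R.D (antiSym (cLift hC π) F a) = toP (c a) (hc.fin a) by
    rw [h]; rfl
  rw [antiSym, map_smul, map_sum]
  have hterm : ∀ σ : Equiv.Perm (Fin (k+1)),
      pS R.D (((Equiv.Perm.sign σ : ℤˣ) : ℤ) • pPerm F σ (cLift hC π (a ∘ σ))) =
        toP (c a) (hc.fin a) := by
    intro σ
    rw [map_zsmul]
    obtain ⟨w, hw⟩ := exists_pT R.D (cLift hC π (a ∘ σ))
    rw [pS_cLift hC π hπ2 hv'] at hw
    rw [hw, map_add, pPerm_pT, map_add, pS_pT, add_zero]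
    exact (hC.skew a σ).symm
  rw [Finset.sum_congr rfl (fun σ _ => hterm σ), Finset.sum_const, Finset.card_univ,
    Fintype.card_perm, Fintype.card_fin, ← Nat.cast_smul_eq_nsmul F, smul_smul,
    inv_mul_cancel₀ (by exact_mod_cast Nat.factorial_ne_zero _), one_smul]

end Surj

end LCC


open LCC in
/-- The identity map on `M/∂^M M` together with the maps induced by
`ψ^k` (`k ≥ 1`) define an embedding of cohomology complexes `Γ^•(A,M) ↪ C̄^•(A,M)`:
the diagrams `ψ^1 ∘ δ = d` on `M/∂^M M` and `ψ^{k+1} ∘ δ = d ∘ ψ^k` on `Γ^k` commute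
(injectivity being the content of `Ker ψ^k = ∂Γ̃^k`, also recorded below).  If,
moreover, `A` decomposes as an `F[∂]`-module into the direct sum of its torsion and
a free submodule, this embedding is an isomorphism of complexes `Γ^• ≅ C̄^•`. -/
theorem psi_morphism_of_complexes_and_iso
    {F : Type*} [Field F] [CharZero F]
    {A M : Type*} [AddCommGroup A] [Module F A] [AddCommGroup M] [Module F M]
    (L : LCA F A) (R : LCAMod F L M) :
    -- ψ^1 ∘ δ = d on C⁰ = Γ⁰ = M/∂^M M (on representatives)
    (∀ m : M, psiRaw R (deltaRaw L R (fun (_ : Fin 0 → A) (_ : Fin 0 → ℕ) => m))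
        = dZero R m) ∧
    -- ψ^{k+1} ∘ δ = d ∘ ψ^k on basic cochains (hence on Γ^k)
    (∀ (k₀ : ℕ) (γ : (Fin (k₀+1) → A) → (Fin (k₀+1) → ℕ) → M), IsGamma R (k₀+1) γ →
      psiRaw R (deltaRaw L R γ) = dRaw L R (psiRaw R γ)) ∧
    -- the induced maps on Γ^k are injective into C̄^k:
    (∀ (k₀ : ℕ) (γ θ : (Fin (k₀+1) → A) → (Fin (k₀+1) → ℕ) → M),
      IsGamma R (k₀+1) γ → IsGamma R (k₀+1) θ → psiRaw R γ = psiRaw R θ →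
        ∃ η, IsGamma R (k₀+1) η ∧ γ - θ = GammaD R η) ∧
    -- isomorphism under the decomposition hypothesis (surjectivity onto C̄^k):
    (Decomposes L →
      ∀ (k₀ : ℕ) (c : (Fin (k₀+1) → A) → (Fin k₀ → ℕ) → M),
        IsCBr R k₀ c → VanishOnTorsion L c →
          ∃ γ, IsGamma R (k₀+1) γ ∧ psiRaw R γ = c) := by
  exact ⟨psi_delta_zero R, fun _ _ h => psi_delta R h,
    fun _ _ _ h1 h2 h => psi_injective R h1 h2 h,
    fun hd _ _ hc hv => psi_surjective R hd hc hv⟩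
end

section
/- Let A be a Lie conformal algebra and M an A-module with a commutative associative product on which ∂^M and all a_λ (a ∈ A) act by derivations. Then: (a) the bracket [a⊗m(x), b⊗n(x)] = [a_{∂_{x₁}} b] ⊗ m(x₁)n(x)|_{x₁=x} − a ⊗ ⟨n(x₁), b_{λ₁} m(x)⟩ + b ⊗ ⟨m(x₁), a_{λ₁} n(x)⟩ on A ⊗ M[[x]] induces a well-defined Lie algebra bracket on 𝔤 = ΠΓ̃₁(A,M); (b) the operator ∂(a⊗m(x)) = a⊗(∂^M − ∂_x)m(x) is a derivation of this Lie algebra, and 𝔤^∂ = ΠΓ₁(A,M) = Ker ∂ is a Lie subalgebra of 𝔤. -/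
namespace LCC

open scoped TensorProduct

variable (F : Type*) [Field F] {A : Type*} [AddCommGroup A] [Module F A]
  {N : Type*} [CommRing N] [Algebra F N] {L : LCA F A}

/-- Coefficient series of `(∂_x^p m)(x) · n(x)`. -/
noncomputable def g1ser (m n : ℕ → N) (p : ℕ) : ℕ → N :=
  fun k => ∑ i ∈ Finset.range (k+1), (((i+p).descFactorial p) • m (i+p)) * n (k-i)

/-- Coefficient series of `⟨m(x₁), b_{λ₁} n(x)⟩`, with `⟨x^p, λ^q⟩ = q! δ_{p,q}`. -/
noncomputable def pairSer (R : LCAMod F L N) (m : ℕ → N) (b₀ : A) (n : ℕ → N) : ℕ → N :=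
  fun k => ∑ᶠ q : ℕ, (q.factorial : F) • (m q * R.act b₀ (n k) q)

/-- `∂_x` acting on power series `N[[x]]`, in coefficient form. -/
noncomputable def derX : (ℕ → N) →ₗ[F] (ℕ → N) where
  toFun m := fun k => (k + 1 : F) • m (k+1)
  map_add' := by intro x y; funext k; simp [smul_add]
  map_smul' := by intro r x; funext k; simp; rw [smul_comm]

/-- `∂^M` acting coefficientwise on power series `N[[x]]`. -/
noncomputable def coefD (R : LCAMod F L N) : (ℕ → N) →ₗ[F] (ℕ → N) where
  toFun m := fun k => R.D (m k)
  map_add' := by intro x y; funext k; simp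
  map_smul' := by intro r x; funext k; simp

/-- The relation operator `∂ ⊗ 1 + 1 ⊗ ∂_x` on `A ⊗ N[[x]]`; the space of basic
1-chains is `Γ̃₁ = (A ⊗ N[[x]]) / Im(∂ ⊗ 1 + 1 ⊗ ∂_x)`. -/
noncomputable def chainRel (L : LCA F A) (N : Type*) [CommRing N] [Algebra F N] :
    (A ⊗[F] (ℕ → N)) →ₗ[F] (A ⊗[F] (ℕ → N)) :=
  LinearMap.rTensor (ℕ → N) L.D + LinearMap.lTensor A (derX F)

/-- The space of basic 1-chains `Γ̃₁(A,N) = (A ⊗ N[[x]])/(∂⊗1 + 1⊗∂_x)(A ⊗ N[[x]])`. -/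
noncomputable abbrev Gamma1 (L : LCA F A) (N : Type*) [CommRing N] [Algebra F N] :=
  (A ⊗[F] (ℕ → N)) ⧸ LinearMap.range (chainRel F L N)

/-- The raw value of the Lie bracket of two generators of `Γ̃₁`:
`[a⊗m(x), b⊗n(x)] = [a_{∂_{x₁}}b] ⊗ m(x₁)n(x)|_{x₁=x}
  − a ⊗ ⟨n(x₁), b_{λ₁} m(x)⟩ + b ⊗ ⟨m(x₁), a_{λ₁} n(x)⟩`. -/
noncomputable def brkGen (R : LCAMod F L N) (a : A) (m : ℕ → N) (b : A) (n : ℕ → N) :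
    A ⊗[F] (ℕ → N) :=
  (∑ᶠ p : ℕ, (L.br a b p) ⊗ₜ[F] (g1ser m n p))
    - a ⊗ₜ[F] (pairSer F R n b m) + b ⊗ₜ[F] (pairSer F R m a n)

/-- The operator `∂` on `A ⊗ N[[x]]` descending to `Γ̃₁`:
`∂(a ⊗ m(x)) = a ⊗ (∂^M − ∂_x)m(x)`. -/
noncomputable def chainPartial (R : LCAMod F L N) :
    (A ⊗[F] (ℕ → N)) →ₗ[F] (A ⊗[F] (ℕ → N)) :=
  LinearMap.lTensor A (coefD F R - derX F)

end LCC

/-! ### Helper material for the proof -/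

namespace LCC

open scoped TensorProduct
open Finset

section Sums

/-- Reindexing of a double sum along anti-diagonals. -/
lemma sum_diag {T : Type*} [AddCommMonoid T] (N : ℕ) (G : ℕ → ℕ → T)
    (h1 : ∀ p j, N ≤ p → G p j = 0) (h2 : ∀ p j, N ≤ j → G p j = 0) :
    ∑ p ∈ range (2 * N), ∑ j ∈ range (p + 1), G (p - j) j
      = ∑ p ∈ range N, ∑ j ∈ range N, G p j := by
  rw [Finset.sum_sigma', Finset.sum_sigma']
  apply Finset.sum_bij_ne_zero (fun x _ _ => (⟨x.1 - x.2, x.2⟩ : (_ : ℕ) × ℕ))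
  · rintro ⟨p, j⟩ _ hne
    simp only [mem_sigma, mem_range]
    constructor
    · by_contra hc; exact hne (h1 _ _ (by simpa using hc))
    · by_contra hc; exact hne (h2 _ _ (by simpa using hc))
  · rintro ⟨p, j⟩ h _ ⟨p', j'⟩ h' _ he
    simp only [mem_sigma, mem_range, Sigma.mk.injEq, heq_eq_eq] at h h' he ⊢
    omega
  · rintro ⟨p, j⟩ h hne
    simp only [mem_sigma, mem_range] at h
    refine ⟨⟨p + j, j⟩, ?_, ?_, ?_⟩
    · simp only [mem_sigma, mem_range]; omega
    · simpa using hne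
    · simp
  · rintro ⟨p, j⟩ _ _
    rfl

lemma fsum_range {W T : Type*} [AddCommMonoid W] [AddCommMonoid T] (u : ℕ →₀ W)
    (h : ℕ → W → T) (h0 : ∀ p, h p 0 = 0) (N : ℕ) (hN : ∀ n, N ≤ n → u n = 0) :
    u.sum h = ∑ p ∈ range N, h p (u p) := by
  apply Finsupp.sum_of_support_subset
  · intro n hn
    rw [mem_range]
    by_contra hc
    exact (Finsupp.mem_support_iff.1 hn) (hN n (by omega))
  · intro i _; exact h0 i

lemma fbound {W : Type*} [AddCommMonoid W] (u : ℕ →₀ W) : ∃ N, ∀ n, N ≤ n → u n = 0 := by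
  refine ⟨u.support.sup id + 1, fun n hn => ?_⟩
  by_contra hc
  have := Finset.le_sup (f := id) (Finsupp.mem_support_iff.2 hc)
  simp only [id] at this
  omega

lemma fbound2 {W : Type*} [AddCommMonoid W] (g : ℕ → ℕ →₀ W) (N₁ : ℕ)
    (h : ∀ q, N₁ ≤ q → g q = 0) : ∃ N, ∀ n, N ≤ n → ∀ q, g q n = 0 := by
  choose B hB using fun q => fbound (g q)
  refine ⟨(range N₁).sup B, fun n hn q => ?_⟩
  by_cases hq : q < N₁
  · exact hB q n (le_trans (Finset.le_sup (f := B) (mem_range.2 hq)) hn)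
  · rw [h q (by omega)]; rfl

end Sums

section Core

variable {F : Type*} [Field F] {A : Type*} [AddCommGroup A] [Module F A]
  {W : Type*} [AddCommGroup W] [Module F W] {L : LCA F A}

/-- The adjoint module. -/
def adMod (L : LCA F A) : LCAMod F L A where
  D := L.D
  act := L.br
  act_fin := L.br_fin
  sesq_left_zero := L.sesq_left_zero
  sesq_left := L.sesq_left
  sesq_right := L.sesq_right
  jacobi := L.jacobi

/-- The `λ`-action as a finitely supported family. -/
noncomputable def actF (R : LCAMod F L W) : A →ₗ[F] W →ₗ[F] (ℕ →₀ W) :=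
  LinearMap.mk₂ F (fun a w => Finsupp.ofSupportFinite (R.act a w) (R.act_fin a w))
    (by intros; ext; simp [Finsupp.ofSupportFinite]; rfl)
    (by intros; ext; simp [Finsupp.ofSupportFinite]; rfl)
    (by intros; ext; simp [Finsupp.ofSupportFinite]; rfl)
    (by intros; ext; simp [Finsupp.ofSupportFinite]; rfl)

@[simp] lemma actF_apply (R : LCAMod F L W) (a : A) (w : W) (n : ℕ) :
    actF R a w n = R.act a w n := rfl

lemma jac_sum {T : Type*} [AddCommGroup T] [Module F T] (R : LCAMod F L W) (a b : A) (w : W)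
    (φ : ℕ → ℕ → W →ₗ[F] T) :
    ((actF R b w).sum fun q x => (actF R a x).sum fun p y => φ p q y)
      - ((actF R a w).sum fun p x => (actF R b x).sum fun q y => φ p q y)
    = (actF (adMod L) a b).sum fun p c => (actF R c w).sum fun s y =>
        ∑ i ∈ range (s + 1), (s.choose i : F) • φ (p + i) (s - i) y := by
  obtain ⟨N1, h1⟩ := fbound (actF R b w)
  obtain ⟨N2, h2⟩ := fbound (actF R a w)
  obtain ⟨N3, h3⟩ := fbound (actF (adMod L) a b)
  obtain ⟨N4, h4⟩ := fbound2 (fun q => actF R a (actF R b w q)) N1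
    (fun q hq => by rw [h1 q hq, map_zero])
  obtain ⟨N5, h5⟩ := fbound2 (fun q => actF R b (actF R a w q)) N2
    (fun q hq => by rw [h2 q hq, map_zero])
  obtain ⟨N6, h6⟩ := fbound2 (fun q => actF R (actF (adMod L) a b q) w) N3
    (fun q hq => by rw [h3 q hq, map_zero]; rfl)
  obtain ⟨N, hN⟩ : ∃ N, N = N1 + N2 + N3 + N4 + N5 + N6 := ⟨_, rfl⟩
  rw [fsum_range (actF R b w) _ (by simp) (2 * N) (fun n hn => h1 n (by omega)),
    fsum_range (actF R a w) _ (by simp) (2 * N) (fun n hn => h2 n (by omega)),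
    fsum_range (actF (adMod L) a b) _ (by simp) N (fun n hn => h3 n (by omega))]
  have e1 : ∀ q, ((actF R a (actF R b w q)).sum fun p y => φ p q y)
      = ∑ p ∈ range (2 * N), φ p q (R.act a (R.act b w q) p) := fun q =>
    fsum_range _ _ (by simp) (2 * N) (fun n hn => h4 n (by omega) q)
  have e2 : ∀ p, ((actF R b (actF R a w p)).sum fun q y => φ p q y)
      = ∑ q ∈ range (2 * N), φ p q (R.act b (R.act a w p) q) := fun p =>
    fsum_range _ _ (by simp) (2 * N) (fun n hn => h5 n (by omega) p)
  have e3 : ∀ p, ((actF R (actF (adMod L) a b p) w).sum fun s y =>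
        ∑ i ∈ range (s + 1), (s.choose i : F) • φ (p + i) (s - i) y)
      = ∑ s ∈ range (2 * N), ∑ i ∈ range (s + 1),
          (s.choose i : F) • φ (p + i) (s - i) (R.act (L.br a b p) w s) := fun p =>
    fsum_range _ _ (by simp) (2 * N) (fun n hn => h6 n (by omega) p)
  simp only [e1, e2, e3]
  rw [Finset.sum_comm, ← Finset.sum_sub_distrib]
  simp only [← Finset.sum_sub_distrib, ← map_sub, R.jacobi, map_sum, map_smul]
  have z1 : ∀ n, N ≤ n → L.br a b n = 0 := fun n hn => h3 n (by omega)
  have z2 : ∀ n, N ≤ n → ∀ q, R.act (L.br a b q) w n = 0 := fun n hn q => h6 n (by omega) q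
  let G : ℕ → ℕ → ℕ → T := fun p j q =>
    ((q + j).choose j : F) • φ (p + j) q (R.act (L.br a b p) w (q + j))
  have g1 : ∀ p j q, N ≤ p → G p j q = 0 := by
    intro p j q h; simp [G, z1 p h]
  have g2 : ∀ p j q, N ≤ j → G p j q = 0 := by
    intro p j q h; simp [G, z2 (q + j) (by omega)]
  have g3 : ∀ p j q, N ≤ q → G p j q = 0 := by
    intro p j q h; simp [G, z2 (q + j) (by omega)]
  have s1 : ∀ q, ∑ p ∈ range (2 * N), ∑ j ∈ range (p + 1),
      ((q + j).choose j : F) • φ p q (R.act (L.br a b (p - j)) w (q + j))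
      = ∑ p ∈ range N, ∑ j ∈ range N, G p j q := by
    intro q
    rw [← sum_diag N (fun p j => G p j q) (fun p j h => g1 p j q h) (fun p j h => g2 p j q h)]
    refine sum_congr rfl fun p _ => sum_congr rfl fun j hj => ?_
    rw [mem_range] at hj
    simp only [G]
    rw [Nat.sub_add_cancel (by omega)]
  have s2 : ∀ p, ∑ s ∈ range (2 * N), ∑ i ∈ range (s + 1),
      (s.choose i : F) • φ (p + i) (s - i) (R.act (L.br a b p) w s)
      = ∑ q ∈ range N, ∑ j ∈ range N, G p j q := by
    intro p
    rw [← sum_diag N (fun q j => G p j q) (fun q j h => g3 p j q h) (fun q j h => g2 p j q h)]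
    refine sum_congr rfl fun s _ => sum_congr rfl fun j hj => ?_
    rw [mem_range] at hj
    simp only [G]
    rw [Nat.sub_add_cancel (by omega)]
  rw [Finset.sum_comm]
  simp only [s2]
  have s1' := fun q => s1 q
  calc _ = ∑ q ∈ range (2 * N), ∑ p ∈ range N, ∑ j ∈ range N, G p j q :=
        sum_congr rfl fun q _ => s1 q
    _ = ∑ q ∈ range N, ∑ p ∈ range N, ∑ j ∈ range N, G p j q := by
        symm
        apply sum_subset
        · intro x; simp only [mem_range]; omega
        · intro q _ hq
          simp only [mem_range] at hq
          exact sum_eq_zero fun p _ => sum_eq_zero fun j _ => g3 p j q (by omega)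
    _ = _ := sum_comm

end Core

section Series

variable (F : Type*) [Field F] {N : Type*} [CommRing N] [Algebra F N]

/-- Product of power series, in coefficient form. -/
noncomputable def mulV : (ℕ → N) →ₗ[F] (ℕ → N) →ₗ[F] (ℕ → N) :=
  LinearMap.mk₂ F (fun f g k => ∑ x ∈ antidiagonal k, f x.1 * g x.2)
    (by intros; ext; simp [add_mul, sum_add_distrib])
    (by intros; ext; simp [smul_sum])
    (by intros; ext; simp [mul_add, sum_add_distrib])
    (by intros; ext; simp [smul_sum])

lemma mulV_apply (f g : ℕ → N) (k : ℕ) :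
    mulV F f g k = ∑ x ∈ antidiagonal k, f x.1 * g x.2 := rfl

lemma mk_mulV (f g : ℕ → N) :
    PowerSeries.mk (mulV F f g) = PowerSeries.mk f * PowerSeries.mk g := by
  ext k; simp [PowerSeries.coeff_mul, mulV_apply]

lemma mk_inj {f g : ℕ → N} (h : PowerSeries.mk f = PowerSeries.mk g) : f = g := by
  funext k
  have := congrArg (PowerSeries.coeff k) h
  simpa using this

lemma mk_add (f g : ℕ → N) : PowerSeries.mk (f + g) = PowerSeries.mk f + PowerSeries.mk g := by
  ext k; simp

lemma mk_derX (f : ℕ → N) :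
    PowerSeries.mk (derX F f) = PowerSeries.derivative N (PowerSeries.mk f) := by
  ext k
  simp [derX, PowerSeries.coeff_derivative, Algebra.smul_def, mul_comm]

lemma mulV_comm (f g : ℕ → N) : mulV F f g = mulV F g f :=
  mk_inj (by simp only [mk_mulV, mul_comm])

lemma mulV_assoc (f g h : ℕ → N) : mulV F (mulV F f g) h = mulV F f (mulV F g h) :=
  mk_inj (by simp only [mk_mulV, mul_assoc])

lemma mulV_left_comm (f g h : ℕ → N) : mulV F f (mulV F g h) = mulV F g (mulV F f h) :=
  mk_inj (by simp only [mk_mulV, mul_left_comm])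

lemma derX_mulV (f g : ℕ → N) :
    derX F (mulV F f g) = mulV F (derX F f) g + mulV F f (derX F g) :=
  mk_inj (by
    simp only [mk_mulV, mk_derX, mk_add, Derivation.leibniz, smul_eq_mul]; ring)

lemma mulV_zero (f g : ℕ → N) : mulV F f g 0 = f 0 * g 0 := by simp [mulV_apply]

lemma compLeft_mulV (θ : N →ₗ[F] N) (hθ : ∀ x y, θ (x * y) = θ x * y + x * θ y)
    (f g : ℕ → N) : θ.compLeft ℕ (mulV F f g)
      = mulV F (θ.compLeft ℕ f) g + mulV F f (θ.compLeft ℕ g) := by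
  funext k
  simp [mulV_apply, hθ, sum_add_distrib]

lemma compLeft_derX (θ : N →ₗ[F] N) (f : ℕ → N) :
    θ.compLeft ℕ (derX F f) = derX F (θ.compLeft ℕ f) := by
  funext k; simp [derX]

lemma compLeft_derX_pow (θ : N →ₗ[F] N) (p : ℕ) (f : ℕ → N) :
    θ.compLeft ℕ ((derX F ^ p) f) = (derX F ^ p) (θ.compLeft ℕ f) := by
  induction p generalizing f with
  | zero => simp
  | succ p ih => rw [pow_succ, Module.End.mul_apply, Module.End.mul_apply, ih, compLeft_derX]

lemma derX_pow_apply (p : ℕ) (f : ℕ → N) (k : ℕ) :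
    (derX F ^ p) f k = ((k + p).descFactorial p) • f (k + p) := by
  induction p generalizing f k with
  | zero => simp
  | succ p ih =>
    rw [pow_succ, Module.End.mul_apply, ih]
    have : derX F f (k + p) = ((k + p + 1 : ℕ) : F) • f (k + p + 1) := by simp [derX]
    rw [this, Nat.cast_smul_eq_nsmul, smul_smul, ← add_assoc, Nat.succ_descFactorial_succ,
      mul_comm]

lemma g1ser_eq (f g : ℕ → N) (p : ℕ) : g1ser f g p = mulV F ((derX F ^ p) f) g := by
  funext k
  rw [mulV_apply, Finset.Nat.sum_antidiagonal_eq_sum_range_succ_mk]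
  simp only [g1ser, derX_pow_apply]

/-- Multiplication as a map on the tensor square. -/
noncomputable def mulT : ((ℕ → N) ⊗[F] (ℕ → N)) →ₗ[F] (ℕ → N) := TensorProduct.lift (mulV F)

noncomputable def d1 : Module.End F ((ℕ → N) ⊗[F] (ℕ → N)) :=
  LinearMap.rTensor (ℕ → N) (derX F)

noncomputable def d2 : Module.End F ((ℕ → N) ⊗[F] (ℕ → N)) :=
  LinearMap.lTensor (ℕ → N) (derX F)

lemma d1_pow (n : ℕ) (f g : ℕ → N) :
    ((d1 F) ^ n) (f ⊗ₜ[F] g) = ((derX F ^ n) f) ⊗ₜ[F] g := by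
  rw [d1, LinearMap.rTensor_pow, LinearMap.rTensor_tmul]

lemma d2_pow (n : ℕ) (f g : ℕ → N) :
    ((d2 F) ^ n) (f ⊗ₜ[F] g) = f ⊗ₜ[F] ((derX F ^ n) g) := by
  rw [d2, LinearMap.lTensor_pow, LinearMap.lTensor_tmul]

lemma d12_comm : Commute (d1 F (N := N)) (d2 F (N := N)) := by
  apply TensorProduct.ext'
  intro f g
  simp [d1, d2]

lemma mulT_d (t : (ℕ → N) ⊗[F] (ℕ → N)) :
    mulT F ((d1 F (N := N) + d2 F (N := N)) t) = derX F (mulT F t) := by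
  induction t with
  | zero => simp
  | add x y hx hy => simp only [map_add, hx, hy]
  | tmul f g => simp [d1, d2, mulT, derX_mulV]

lemma mulT_d_pow (n : ℕ) (t : (ℕ → N) ⊗[F] (ℕ → N)) :
    mulT F (((d1 F (N := N) + d2 F (N := N)) ^ n) t) = (derX F ^ n) (mulT F t) := by
  induction n generalizing t with
  | zero => simp
  | succ n ih => rw [pow_succ, Module.End.mul_apply, ih, mulT_d, pow_succ, Module.End.mul_apply]

lemma derX_pow_mulV (n : ℕ) (f g : ℕ → N) :
    (derX F ^ n) (mulV F f g) = ∑ i ∈ range (n + 1),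
      (n.choose i : F) • mulV F ((derX F ^ i) f) ((derX F ^ (n - i)) g) := by
  have h := mulT_d_pow F n (f ⊗ₜ[F] g)
  rw [(d12_comm F).add_pow] at h
  have h0 : mulT F (f ⊗ₜ[F] g) = mulV F f g := by simp [mulT]
  rw [h0] at h
  rw [← h, LinearMap.sum_apply, map_sum]
  refine sum_congr rfl fun i _ => ?_
  rw [← nsmul_eq_mul', LinearMap.smul_apply, Module.End.mul_apply, d2_pow, d1_pow, map_nsmul,
    Nat.cast_smul_eq_nsmul]
  simp [mulT]

lemma alt_mulV (n : ℕ) (f g : ℕ → N) :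
    ∑ p ∈ range (n + 1), ((-1 : F) ^ p * (n.choose p : F)) •
      (derX F ^ (n - p)) (mulV F ((derX F ^ p) f) g) = mulV F f ((derX F ^ n) g) := by
  have hc : Commute ((-1 : F) • (d1 F (N := N))) (d1 F (N := N) + d2 F (N := N)) :=
    ((Commute.refl (d1 F (N := N))).add_right (d12_comm F)).smul_left (-1 : F)
  have h := hc.add_pow n
  have h2 : (-1 : F) • (d1 F (N := N)) + (d1 F (N := N) + d2 F (N := N)) = d2 F (N := N) := by
    rw [← add_assoc]
    nth_rewrite 2 [← one_smul F (d1 F (N := N))]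
    rw [← add_smul]; simp
  rw [h2] at h
  have h' := congrArg (fun e => mulT F (e (f ⊗ₜ[F] g))) h
  simp only [d2_pow] at h'
  have e0 : mulT F (f ⊗ₜ[F] ((derX F ^ n) g)) = mulV F f ((derX F ^ n) g) := by simp [mulT]
  rw [← e0, h', LinearMap.sum_apply, map_sum]
  refine sum_congr rfl fun p _ => ?_
  rw [mul_comm, mul_smul, Nat.cast_smul_eq_nsmul]
  rw [← nsmul_eq_mul', LinearMap.smul_apply, map_nsmul,
    ((hc.pow_left p).pow_right (n - p)).eq, Module.End.mul_apply, mulT_d_pow, smul_pow,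
    LinearMap.smul_apply, d1_pow, map_smul, map_smul]
  simp [mulT]

end Series

section Bracket

variable {F : Type*} [Field F] {A : Type*} [AddCommGroup A] [Module F A]
  {N : Type*} [CommRing N] [Algebra F N] {L : LCA F A}

/-- `⟨f(x₁), a_{λ₁} v⟩` for `v` in the module. -/
noncomputable def pGen (R : LCAMod F L N) (a : A) (f : ℕ → N) (v : N) : N :=
  (actF R a v).sum fun q y => (derX F ^ q) f 0 * y

lemma pGen_eq (R : LCAMod F L N) (a : A) (f : ℕ → N) (v : N) :
    pGen R a f v = Finsupp.lsum F
      (fun q => LinearMap.mulLeft F ((derX F ^ q) f 0)) (actF R a v) := rfl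

lemma pGen_add_left (R : LCAMod F L N) (a : A) (f g : ℕ → N) (v : N) :
    pGen R a (f + g) v = pGen R a f v + pGen R a g v := by
  simp [pGen, add_mul, Finsupp.sum_add]

lemma pGen_smul_left (R : LCAMod F L N) (c : F) (a : A) (f : ℕ → N) (v : N) :
    pGen R a (c • f) v = c • pGen R a f v := by
  simp [pGen, Finsupp.smul_sum]

noncomputable def pGenL (R : LCAMod F L N) (a : A) (f : ℕ → N) : N →ₗ[F] N where
  toFun := pGen R a f
  map_add' := by intros; simp only [pGen_eq, map_add]
  map_smul' := by intros; simp only [pGen_eq, map_smul, RingHom.id_apply]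

lemma pGenL_apply (R : LCAMod F L N) (a : A) (f : ℕ → N) (v : N) :
    pGenL R a f v = pGen R a f v := rfl

/-- The representation of chains on the module. -/
noncomputable def pMap (R : LCAMod F L N) : (A ⊗[F] (ℕ → N)) →ₗ[F] (N →ₗ[F] N) :=
  TensorProduct.lift (LinearMap.mk₂ F (fun a f => pGenL R a f)
    (by intros; ext; simp only [pGenL_apply, LinearMap.add_apply, pGen_eq, map_add])
    (by intros; ext; simp only [pGenL_apply, LinearMap.smul_apply, pGen_eq, map_smul])
    (by intros; ext; simp only [pGenL_apply, LinearMap.add_apply, pGen_add_left])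
    (by intros; ext; simp only [pGenL_apply, LinearMap.smul_apply, pGen_smul_left]))

lemma pMap_tmul (R : LCAMod F L N) (a : A) (f : ℕ → N) (v : N) :
    pMap R (a ⊗ₜ[F] f) v = (actF R a v).sum fun q y => (derX F ^ q) f 0 * y := rfl

/-- The first term of the bracket. -/
noncomputable def kGen (L : LCA F A) (a : A) (f : ℕ → N) (b : A) (g : ℕ → N) :
    A ⊗[F] (ℕ → N) :=
  (actF (adMod L) a b).sum fun p c => c ⊗ₜ[F] (mulV F ((derX F ^ p) f) g)

lemma kGen_eq (L : LCA F A) (a : A) (f : ℕ → N) (b : A) (g : ℕ → N) :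
    kGen L a f b g = Finsupp.lsum F
      (fun p => (TensorProduct.mk F A (ℕ → N)).flip (mulV F ((derX F ^ p) f) g))
      (actF (adMod L) a b) := rfl

lemma kGen_add₂ (a : A) (f f' : ℕ → N) (b : A) (g : ℕ → N) :
    kGen L a (f + f') b g = kGen L a f b g + kGen L a f' b g := by
  simp [kGen, TensorProduct.tmul_add, Finsupp.sum_add]

lemma kGen_smul₂ (r : F) (a : A) (f : ℕ → N) (b : A) (g : ℕ → N) :
    kGen L a (r • f) b g = r • kGen L a f b g := by
  simp [kGen, TensorProduct.tmul_smul, Finsupp.smul_sum]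

lemma kGen_add₄ (a : A) (f : ℕ → N) (b : A) (g g' : ℕ → N) :
    kGen L a f b (g + g') = kGen L a f b g + kGen L a f b g' := by
  simp [kGen, TensorProduct.tmul_add, Finsupp.sum_add]

lemma kGen_smul₄ (r : F) (a : A) (f : ℕ → N) (b : A) (g : ℕ → N) :
    kGen L a f b (r • g) = r • kGen L a f b g := by
  simp [kGen, TensorProduct.tmul_smul, Finsupp.smul_sum]

noncomputable def kMap₁ (L : LCA F A) (a : A) (f : ℕ → N) :
    (A ⊗[F] (ℕ → N)) →ₗ[F] (A ⊗[F] (ℕ → N)) :=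
  TensorProduct.lift (LinearMap.mk₂ F (fun b g => kGen L a f b g)
    (by intros; simp only [kGen_eq, map_add])
    (by intros; simp only [kGen_eq, map_smul])
    (by intros; simp only [kGen_add₄])
    (by intros; simp only [kGen_smul₄]))

lemma kMap₁_tmul (a : A) (f : ℕ → N) (b : A) (g : ℕ → N) :
    kMap₁ L a f (b ⊗ₜ[F] g) = kGen L a f b g := rfl

noncomputable def kMap (L : LCA F A) (N : Type*) [CommRing N] [Algebra F N] :
    (A ⊗[F] (ℕ → N)) →ₗ[F] (A ⊗[F] (ℕ → N)) →ₗ[F] (A ⊗[F] (ℕ → N)) :=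
  TensorProduct.lift (LinearMap.mk₂ F (fun a f => kMap₁ L a f)
    (by
      intros; apply TensorProduct.ext'; intros
      simp only [LinearMap.add_apply, kMap₁_tmul, kGen_eq, map_add])
    (by
      intros; apply TensorProduct.ext'; intros
      simp only [LinearMap.smul_apply, kMap₁_tmul, kGen_eq, map_smul])
    (by
      intros; apply TensorProduct.ext'; intros
      simp only [LinearMap.add_apply, kMap₁_tmul, kGen_add₂])
    (by
      intros; apply TensorProduct.ext'; intros
      simp only [LinearMap.smul_apply, kMap₁_tmul, kGen_smul₂]))

lemma kMap_tmul (a : A) (f : ℕ → N) (b : A) (g : ℕ → N) :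
    kMap L N (a ⊗ₜ[F] f) (b ⊗ₜ[F] g)
      = (actF (adMod L) a b).sum fun p c => c ⊗ₜ[F] (mulV F ((derX F ^ p) f) g) := rfl

/-- Coefficientwise operator on `A ⊗ N[[x]]`. -/
noncomputable def cMap (A : Type*) [AddCommGroup A] [Module F A] :
    (N →ₗ[F] N) →ₗ[F] (A ⊗[F] (ℕ → N)) →ₗ[F] (A ⊗[F] (ℕ → N)) where
  toFun θ := LinearMap.lTensor A (θ.compLeft ℕ)
  map_add' x y := by
    rw [← LinearMap.lTensor_add]; rfl
  map_smul' r x := by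
    rw [RingHom.id_apply, ← LinearMap.lTensor_smul]; rfl

lemma cMap_tmul (θ : N →ₗ[F] N) (a : A) (f : ℕ → N) :
    cMap A θ (a ⊗ₜ[F] f) = a ⊗ₜ[F] (θ.compLeft ℕ f) := rfl

/-- The bracket on `A ⊗ N[[x]]`. -/
noncomputable def bMap (R : LCAMod F L N) :
    (A ⊗[F] (ℕ → N)) →ₗ[F] (A ⊗[F] (ℕ → N)) →ₗ[F] (A ⊗[F] (ℕ → N)) :=
  kMap L N - ((cMap A).comp (pMap R)).flip + (cMap A).comp (pMap R)

lemma bMap_apply (R : LCAMod F L N) (X Y : A ⊗[F] (ℕ → N)) :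
    bMap R X Y = kMap L N X Y - cMap A (pMap R Y) X + cMap A (pMap R X) Y := rfl

lemma derX_pow_zero (q : ℕ) (f : ℕ → N) : (derX F ^ q) f 0 = (q.factorial : F) • f q := by
  rw [derX_pow_apply, Nat.cast_smul_eq_nsmul]; simp [Nat.descFactorial_self]

lemma pairSer_eq (R : LCAMod F L N) (f : ℕ → N) (a : A) (g : ℕ → N) :
    pairSer F R f a g = (pMap R (a ⊗ₜ[F] f)).compLeft ℕ g := by
  funext k
  rw [LinearMap.compLeft_apply, Function.comp_apply, pMap_tmul]
  simp only [pairSer]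
  rw [finsum_eq_sum_of_support_subset (s := (actF R a (g k)).support)]
  · refine sum_congr rfl fun q _ => ?_
    simp only [derX_pow_zero, actF_apply, smul_mul_assoc]
  · intro q hq
    rw [Function.mem_support] at hq
    rw [mem_coe, Finsupp.mem_support_iff]
    intro h; apply hq
    rw [actF_apply] at h
    simp [h]

lemma bMap_tmul (R : LCAMod F L N) (a : A) (f : ℕ → N) (b : A) (g : ℕ → N) :
    bMap R (a ⊗ₜ[F] f) (b ⊗ₜ[F] g) = brkGen F R a f b g := by
  rw [bMap_apply, kMap_tmul, cMap_tmul, cMap_tmul, brkGen, pairSer_eq, pairSer_eq]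
  congr 2
  rw [finsum_eq_sum_of_support_subset (s := (actF (adMod L) a b).support)]
  · refine sum_congr rfl fun q _ => ?_
    rw [g1ser_eq F]; rfl
  · intro q hq
    rw [Function.mem_support] at hq
    rw [mem_coe, Finsupp.mem_support_iff]
    intro h; apply hq
    change L.br a b q = 0 at h
    simp [h]



lemma pMap_der (R : LCAMod F L N)
    (hact : ∀ (a : A) (m n : N) (p : ℕ),
      R.act a (m * n) p = R.act a m p * n + m * R.act a n p)
    (X : A ⊗[F] (ℕ → N)) (u v : N) :
    pMap R X (u * v) = pMap R X u * v + u * pMap R X v := by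
  induction X with
  | zero => simp
  | add x y hx hy => simp only [map_add, LinearMap.add_apply, hx, hy]; ring
  | tmul a f =>
    obtain ⟨N1, h1⟩ := fbound (actF R a u)
    obtain ⟨N2, h2⟩ := fbound (actF R a v)
    obtain ⟨N3, h3⟩ := fbound (actF R a (u * v))
    simp only [pMap_tmul]
    rw [fsum_range _ _ (by simp) (N1 + N2 + N3) (fun n hn => h1 n (by omega)),
      fsum_range _ _ (by simp) (N1 + N2 + N3) (fun n hn => h2 n (by omega)),
      fsum_range _ _ (by simp) (N1 + N2 + N3) (fun n hn => h3 n (by omega)),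
      sum_mul, mul_sum, ← sum_add_distrib]
    refine sum_congr rfl fun p _ => ?_
    simp only [actF_apply, hact]; ring

/-- Derivations of the series algebra commuting with `∂_x` act by derivations of `kMap`. -/
lemma lTensor_kMap (E : (ℕ → N) →ₗ[F] (ℕ → N))
    (h1 : ∀ f g, E (mulV F f g) = mulV F (E f) g + mulV F f (E g))
    (h2 : ∀ f, E (derX F f) = derX F (E f)) (X Y : A ⊗[F] (ℕ → N)) :
    LinearMap.lTensor A E (kMap L N X Y)
      = kMap L N (LinearMap.lTensor A E X) Y + kMap L N X (LinearMap.lTensor A E Y) := by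
  have h3 : ∀ p f, E ((derX F ^ p) f) = (derX F ^ p) (E f) := by
    intro p
    induction p with
    | zero => simp
    | succ p ih =>
      intro f
      rw [pow_succ, Module.End.mul_apply, Module.End.mul_apply, ih, h2]
  induction X with
  | zero => simp
  | add x y hx hy => simp only [map_add, LinearMap.add_apply, hx, hy]; abel
  | tmul a f =>
    induction Y with
    | zero => simp
    | add x y hx hy => simp only [map_add, hx, hy]; abel
    | tmul b g =>
      simp only [LinearMap.lTensor_tmul, kMap_tmul, map_finsuppSum, h1, h3,
        TensorProduct.tmul_add, Finsupp.sum_add]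

lemma cMap_kMap (θ : N →ₗ[F] N) (hθ : ∀ x y, θ (x * y) = θ x * y + x * θ y)
    (X Y : A ⊗[F] (ℕ → N)) :
    cMap A θ (kMap L N X Y) = kMap L N (cMap A θ X) Y + kMap L N X (cMap A θ Y) :=
  lTensor_kMap _ (compLeft_mulV F θ hθ) (compLeft_derX F θ) X Y

lemma cMap_mul (θ η : N →ₗ[F] N) (X : A ⊗[F] (ℕ → N)) :
    cMap A (θ * η) X = cMap A θ (cMap A η X) := by
  induction X with
  | zero => simp
  | add x y hx hy => simp only [map_add, hx, hy]
  | tmul a f => rfl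

lemma kMap_jac (X Y Z : A ⊗[F] (ℕ → N)) :
    kMap L N X (kMap L N Y Z) - kMap L N Y (kMap L N X Z) = kMap L N (kMap L N X Y) Z := by
  induction X with
  | zero => simp
  | add x y hx hy => simp only [map_add, LinearMap.add_apply, ← hx, ← hy]; abel
  | tmul a f =>
  induction Y with
  | zero => simp
  | add x y hx hy => simp only [map_add, LinearMap.add_apply, ← hx, ← hy]; abel
  | tmul b g =>
  induction Z with
  | zero => simp
  | add x y hx hy => simp only [map_add, ← hx, ← hy]; abel
  | tmul c h =>
  have key := jac_sum (adMod L) a b c (fun p q => (TensorProduct.mk F A (ℕ → N)).flip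
    (mulV F ((derX F ^ p) f) (mulV F ((derX F ^ q) g) h)))
  simp only [LinearMap.flip_apply, TensorProduct.mk_apply] at key
  rw [kMap_tmul b, kMap_tmul a f c, map_finsuppSum, map_finsuppSum]
  rw [← LinearMap.flip_apply (kMap L N), kMap_tmul a f b, map_finsuppSum]
  simp only [LinearMap.flip_apply, kMap_tmul]
  have t : ∀ p q, mulV F ((derX F ^ q) g) (mulV F ((derX F ^ p) f) h)
      = mulV F ((derX F ^ p) f) (mulV F ((derX F ^ q) g) h) :=
    fun p q => mulV_left_comm F _ _ _
  simp only [t]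
  refine key.trans ?_
  refine Finsupp.sum_congr fun p _ => Finsupp.sum_congr fun s _ => ?_
  · symm
    rw [derX_pow_mulV, map_sum, LinearMap.sum_apply, TensorProduct.tmul_sum]
    refine sum_congr rfl fun i _ => ?_
    rw [map_smul, LinearMap.smul_apply, TensorProduct.tmul_smul, mulV_assoc,
      add_comm p i, pow_add, Module.End.mul_apply]

lemma pMap_comp_tmul (R : LCAMod F L N) (θ : N →ₗ[F] N) (b : A) (g : ℕ → N) (v : N) :
    pMap R (cMap A θ (b ⊗ₜ[F] g)) v
      = (actF R b v).sum fun q y => θ ((derX F ^ q) g 0) * y := by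
  rw [cMap_tmul, pMap_tmul]
  congr 1
  funext q y
  rw [← compLeft_derX_pow]; rfl

lemma pMap_bMap (R : LCAMod F L N)
    (hact : ∀ (a : A) (m n : N) (p : ℕ),
      R.act a (m * n) p = R.act a m p * n + m * R.act a n p)
    (X Y : A ⊗[F] (ℕ → N)) :
    pMap R (bMap R X Y) = pMap R X * pMap R Y - pMap R Y * pMap R X := by
  induction X with
  | zero => simp
  | add x y hx hy =>
    simp only [map_add, LinearMap.add_apply, hx, hy, add_mul, mul_add]; abel
  | tmul a f =>
  induction Y with
  | zero => simp
  | add x y hx hy => simp only [map_add, hx, hy, add_mul, mul_add]; abel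
  | tmul b g =>
  ext v
  have e : ∀ (a : A) (f : ℕ → N) (b : A) (g : ℕ → N),
      pMap R (a ⊗ₜ[F] f) (pMap R (b ⊗ₜ[F] g) v)
      = pMap R (cMap A (pMap R (a ⊗ₜ[F] f)) (b ⊗ₜ[F] g)) v
        + (actF R b v).sum fun q x => (actF R a x).sum fun p y =>
            (derX F ^ q) g 0 * ((derX F ^ p) f 0 * y) := by
    intro a f b g
    rw [pMap_tmul R b, map_finsuppSum, pMap_comp_tmul]
    simp only [pMap_der R hact, Finsupp.sum_add]
    congr 2
    funext q x
    rw [pMap_tmul, Finsupp.mul_sum]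
  have key := jac_sum R a b v (fun p q =>
    LinearMap.mulLeft F ((derX F ^ q) g 0 * (derX F ^ p) f 0))
  simp only [LinearMap.mulLeft_apply] at key
  have k2 : pMap R (kMap L N (a ⊗ₜ[F] f) (b ⊗ₜ[F] g)) v
      = (actF R b v).sum (fun q x => (actF R a x).sum fun p y =>
            (derX F ^ q) g 0 * ((derX F ^ p) f 0 * y))
        - (actF R a v).sum (fun p x => (actF R b x).sum fun q y =>
            (derX F ^ p) f 0 * ((derX F ^ q) g 0 * y)) := by
    simp only [← mul_assoc]
    have : (actF R a v).sum (fun p x => (actF R b x).sum fun q y =>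
            (derX F ^ p) f 0 * (derX F ^ q) g 0 * y)
        = (actF R a v).sum (fun p x => (actF R b x).sum fun q y =>
            (derX F ^ q) g 0 * (derX F ^ p) f 0 * y) := by
      congr 1
      funext p x
      congr 1
      funext q y
      rw [mul_comm ((derX F ^ p) f 0)]
    rw [this, key, ← LinearMap.flip_apply (pMap R), kMap_tmul, map_finsuppSum]
    congr 1
    funext p x
    rw [LinearMap.flip_apply, pMap_tmul]
    congr 1
    funext s y
    rw [derX_pow_mulV, Finset.sum_apply, sum_mul]
    refine sum_congr rfl fun i _ => ?_
    rw [Pi.smul_apply, mulV_zero, smul_mul_assoc, ← Module.End.mul_apply, ← pow_add,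
      add_comm i p, mul_comm ((derX F ^ (p + i)) f 0)]
  simp only [bMap_apply, map_add, map_sub, LinearMap.add_apply, LinearMap.sub_apply,
    Module.End.mul_apply, e, k2]
  abel

lemma sesq_sum {W : Type*} [AddCommGroup W] [Module F W] {T : Type*} [AddCommGroup T]
    [Module F T] (R : LCAMod F L W) (a : A) (w : W) (ψ : ℕ → W →ₗ[F] T) :
    ((actF R (L.D a) w).sum fun p y => ψ p y) = - (actF R a w).sum fun p y => ψ (p + 1) y := by
  obtain ⟨N1, h1⟩ := fbound (actF R (L.D a) w)
  obtain ⟨N2, h2⟩ := fbound (actF R a w)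
  rw [fsum_range _ _ (by simp) (N1 + N2 + 1) (fun n hn => h1 n (by omega)),
    fsum_range _ _ (by simp) (N1 + N2) (fun n hn => h2 n (by omega)), sum_range_succ']
  simp [R.sesq_left, R.sesq_left_zero]

lemma chainRel_tmul (a : A) (f : ℕ → N) :
    chainRel F L N (a ⊗ₜ[F] f) = (L.D a) ⊗ₜ[F] f + a ⊗ₜ[F] (derX F f) := rfl

lemma pMap_chainRel (R : LCAMod F L N) (t : A ⊗[F] (ℕ → N)) :
    pMap R (chainRel F L N t) = 0 := by
  induction t with
  | zero => simp
  | add x y hx hy => simp only [map_add, hx, hy, add_zero]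
  | tmul a f =>
    ext v
    have := sesq_sum R a v (fun p => LinearMap.mulLeft F ((derX F ^ p) f 0))
    simp only [LinearMap.mulLeft_apply] at this
    rw [chainRel_tmul, map_add, LinearMap.add_apply, pMap_tmul, pMap_tmul, this]
    simp only [pow_succ, Module.End.mul_apply, neg_add_cancel, LinearMap.zero_apply]

lemma kMap_chainRel (t Y : A ⊗[F] (ℕ → N)) :
    kMap L N (chainRel F L N t) Y = 0 := by
  induction t with
  | zero => simp
  | add x y hx hy => simp only [map_add, LinearMap.add_apply, hx, hy, add_zero]
  | tmul a f =>
  induction Y with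
  | zero => simp
  | add x y hx hy => simp only [map_add, hx, hy, add_zero]
  | tmul b g =>
    have := sesq_sum (adMod L) a b (fun p => (TensorProduct.mk F A (ℕ → N)).flip
      (mulV F ((derX F ^ p) f) g))
    simp only [LinearMap.flip_apply, TensorProduct.mk_apply] at this
    rw [chainRel_tmul, map_add, LinearMap.add_apply, kMap_tmul, kMap_tmul, this]
    simp only [pow_succ, Module.End.mul_apply, neg_add_cancel]

lemma cMap_chainRel (θ : N →ₗ[F] N) (t : A ⊗[F] (ℕ → N)) :
    cMap A θ (chainRel F L N t) = chainRel F L N (cMap A θ t) := by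
  induction t with
  | zero => simp
  | add x y hx hy => simp only [map_add, hx, hy]
  | tmul a f =>
    simp only [chainRel_tmul, cMap_tmul, map_add, compLeft_derX]

lemma bMap_chainRel (R : LCAMod F L N) (t Y : A ⊗[F] (ℕ → N)) :
    bMap R (chainRel F L N t) Y ∈ LinearMap.range (chainRel F L N) := by
  rw [bMap_apply, kMap_chainRel, pMap_chainRel, cMap_chainRel]
  refine ⟨-(cMap A (pMap R Y) t), ?_⟩
  simp

/-- `∂` on chains is a derivation for the representation. -/
lemma D_pMap (R : LCAMod F L N)
    (hD : ∀ m n : N, R.D (m * n) = R.D m * n + m * R.D n)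
    (X : A ⊗[F] (ℕ → N)) (v : N) :
    R.D (pMap R X v) = pMap R (chainPartial F R X) v + pMap R X (R.D v) := by
  induction X with
  | zero => simp
  | add x y hx hy => simp only [map_add, LinearMap.add_apply, hx, hy]; abel
  | tmul a f =>
    have e : chainPartial F R (a ⊗ₜ[F] f)
        = cMap A R.D (a ⊗ₜ[F] f) - a ⊗ₜ[F] (derX F f) := by
      rw [chainPartial, LinearMap.lTensor_tmul, LinearMap.sub_apply, TensorProduct.tmul_sub]
      rfl
    obtain ⟨N1, h1⟩ := fbound (actF R a (R.D v))
    obtain ⟨N2, h2⟩ := fbound (actF R a v)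
    rw [e, map_sub, LinearMap.sub_apply, pMap_comp_tmul]
    simp only [pMap_tmul]
    rw [map_finsuppSum]
    rw [fsum_range (actF R a (R.D v)) _ (by simp) (N1 + N2 + 1) (fun n hn => h1 n (by omega)),
      fsum_range (actF R a v) _ (by simp) (N1 + N2 + 1) (fun n hn => h2 n (by omega)),
      fsum_range (actF R a v) _ (by simp) (N1 + N2 + 1) (fun n hn => h2 n (by omega)),
      fsum_range (actF R a v) (fun q y => (derX F ^ q) (derX F f) 0 * y) (by simp) (N1 + N2)
        (fun n hn => h2 n (by omega))]
    simp only [actF_apply, hD, sum_add_distrib, R.sesq_right, mul_add]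
    have : ∑ q ∈ range (N1 + N2 + 1), (derX F ^ q) f 0 *
        (if q = 0 then 0 else R.act a v (q - 1))
        = ∑ q ∈ range (N1 + N2), (derX F ^ q) (derX F f) 0 * R.act a v q := by
      rw [sum_range_succ']
      simp [pow_succ, Module.End.mul_apply]
    rw [this]
    abel

lemma chainPartial_cMap (R : LCAMod F L N)
    (hD : ∀ m n : N, R.D (m * n) = R.D m * n + m * R.D n)
    (X Y : A ⊗[F] (ℕ → N)) :
    chainPartial F R (cMap A (pMap R X) Y)
      = cMap A (pMap R (chainPartial F R X)) Y + cMap A (pMap R X) (chainPartial F R Y) := by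
  induction Y with
  | zero => simp
  | add x y hx hy => simp only [map_add, hx, hy]; abel
  | tmul b g =>
    rw [cMap_tmul, cMap_tmul, chainPartial, LinearMap.lTensor_tmul, LinearMap.lTensor_tmul,
      cMap_tmul, ← TensorProduct.tmul_add]
    congr 1
    rw [LinearMap.sub_apply, LinearMap.sub_apply, map_sub, compLeft_derX, ← add_sub_assoc]
    congr 1
    funext k
    exact D_pMap R hD X (g k)

lemma chainPartial_bMap (R : LCAMod F L N)
    (hD : ∀ m n : N, R.D (m * n) = R.D m * n + m * R.D n)
    (X Y : A ⊗[F] (ℕ → N)) :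
    chainPartial F R (bMap R X Y)
      = bMap R (chainPartial F R X) Y + bMap R X (chainPartial F R Y) := by
  have h1 : ∀ f g, (coefD F R - derX F : (ℕ → N) →ₗ[F] (ℕ → N)) (mulV F f g)
      = mulV F ((coefD F R - derX F : (ℕ → N) →ₗ[F] (ℕ → N)) f) g + mulV F f ((coefD F R - derX F : (ℕ → N) →ₗ[F] (ℕ → N)) g) := by
    intro f g
    have := compLeft_mulV F R.D hD f g
    change coefD F R _ = mulV F (coefD F R _) _ + mulV F _ (coefD F R _) at this
    simp only [LinearMap.sub_apply, map_sub, this, derX_mulV]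
    abel
  have h2 : ∀ f, (coefD F R - derX F : (ℕ → N) →ₗ[F] (ℕ → N)) (derX F f) = derX F ((coefD F R - derX F : (ℕ → N) →ₗ[F] (ℕ → N)) f) := by
    intro f
    have := compLeft_derX F R.D f
    change coefD F R _ = derX F (coefD F R _) at this
    simp only [LinearMap.sub_apply, map_sub, this]
  have h3 := lTensor_kMap (A := A) (L := L) _ h1 h2 X Y
  change chainPartial F R _ = kMap L N (chainPartial F R X) Y
    + kMap L N X (chainPartial F R Y) at h3
  simp only [bMap_apply, map_add, map_sub, h3, chainPartial_cMap R hD]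
  abel

lemma chainPartial_chainRel (R : LCAMod F L N) (t : A ⊗[F] (ℕ → N)) :
    chainPartial F R (chainRel F L N t) = chainRel F L N (chainPartial F R t) := by
  induction t with
  | zero => simp
  | add x y hx hy => simp only [map_add, hx, hy]
  | tmul a f =>
    have := compLeft_derX F R.D f
    change coefD F R _ = derX F (coefD F R _) at this
    simp only [chainRel_tmul, chainPartial, map_add, LinearMap.lTensor_tmul,
      LinearMap.sub_apply, map_sub, this]

lemma mk_D_tmul (a : A) (f : ℕ → N) :
    (Submodule.Quotient.mk ((L.D a) ⊗ₜ[F] f) : Gamma1 F L N)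
      = - Submodule.Quotient.mk (a ⊗ₜ[F] (derX F f)) := by
  rw [eq_neg_iff_add_eq_zero, ← Submodule.Quotient.mk_add, Submodule.Quotient.mk_eq_zero]
  exact ⟨a ⊗ₜ[F] f, rfl⟩

lemma mk_Dpow_tmul (k : ℕ) (a : A) (f : ℕ → N) :
    (Submodule.Quotient.mk (((L.D ^ k) a) ⊗ₜ[F] f) : Gamma1 F L N)
      = ((-1 : F) ^ k) • Submodule.Quotient.mk (a ⊗ₜ[F] ((derX F ^ k) f)) := by
  induction k generalizing a f with
  | zero => simp
  | succ k ih =>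
    rw [pow_succ, Module.End.mul_apply, ih, mk_D_tmul, pow_succ' (derX F), Module.End.mul_apply,
      pow_succ]
    simp

lemma kMap_skew_tmul (a : A) (f : ℕ → N) (b : A) (g : ℕ → N) :
    (Submodule.Quotient.mk (kMap L N (a ⊗ₜ[F] f) (b ⊗ₜ[F] g)) : Gamma1 F L N)
      = - Submodule.Quotient.mk (kMap L N (b ⊗ₜ[F] g) (a ⊗ₜ[F] f)) := by
  obtain ⟨N1, h1⟩ := fbound (actF (adMod L) a b)
  obtain ⟨N2, h2⟩ := fbound (actF (adMod L) b a)
  obtain ⟨K, hK⟩ : ∃ K, K = N1 + N2 := ⟨_, rfl⟩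
  have z2 : ∀ n, K ≤ n → L.br b a n = 0 := fun n hn => h2 n (by omega)
  have sk : ∀ m, L.br a b m = - ∑ n ∈ range K,
      ((-1 : F)^n * (n.choose m : F)) • ((L.D ^ (n - m)) (L.br b a n)) := by
    intro m
    rw [L.skew a b m, finsum_eq_sum_of_support_subset]
    intro n hn
    rw [Function.mem_support] at hn
    rw [mem_coe, mem_range]
    by_contra hc
    exact hn (by rw [z2 n (by omega)]; simp)
  rw [kMap_tmul, kMap_tmul,
    fsum_range (actF (adMod L) a b) _ (by simp) K (fun n hn => h1 n (by omega)),
    fsum_range (actF (adMod L) b a) _ (by simp) K (fun n hn => h2 n (by omega))]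
  simp only [← Submodule.mkQ_apply, map_sum]
  simp only [Submodule.mkQ_apply, actF_apply]
  change ∑ p ∈ range K, Submodule.Quotient.mk ((L.br a b p) ⊗ₜ[F] _) =
    - ∑ n ∈ range K, Submodule.Quotient.mk ((L.br b a n) ⊗ₜ[F] _)
  have e1 : ∀ p, (Submodule.Quotient.mk ((L.br a b p) ⊗ₜ[F] (mulV F ((derX F ^ p) f) g)) :
        Gamma1 F L N)
      = - ∑ n ∈ range K, if p ≤ n then Submodule.Quotient.mk ((L.br b a n) ⊗ₜ[F]
          (((-1 : F) ^ p * (n.choose p : F)) •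
            (derX F ^ (n - p)) (mulV F ((derX F ^ p) f) g))) else 0 := by
    intro p
    rw [sk p, TensorProduct.neg_tmul, Submodule.Quotient.mk_neg, TensorProduct.sum_tmul]
    simp only [← Submodule.mkQ_apply, map_sum]
    congr 1
    refine sum_congr rfl fun n _ => ?_
    split_ifs with hpn
    · rw [TensorProduct.tmul_smul, ← TensorProduct.smul_tmul', map_smul, map_smul,
        Submodule.mkQ_apply, mk_Dpow_tmul, smul_smul, Submodule.mkQ_apply]
      congr 1
      obtain ⟨k, rfl⟩ := Nat.exists_eq_add_of_le hpn
      rw [Nat.add_sub_cancel_left, pow_add]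
      have : (-1 : F) ^ k * (-1) ^ k = 1 := by rw [← mul_pow]; simp
      linear_combination ((-1 : F) ^ p * ((p + k).choose p : F)) * this
    · rw [Nat.choose_eq_zero_of_lt (by omega)]; simp
  simp only [e1, sum_neg_distrib]
  rw [sum_comm]
  congr 1
  refine sum_congr rfl fun n hn => ?_
  rw [mem_range] at hn
  rw [← sum_filter]
  have : (range K).filter (fun p => p ≤ n) = range (n + 1) := by
    ext p; simp only [mem_filter, mem_range]; omega
  rw [this, mulV_comm F _ f, ← alt_mulV, TensorProduct.tmul_sum]
  simp only [← Submodule.mkQ_apply, map_sum]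

lemma kMap_skew (X Y : A ⊗[F] (ℕ → N)) :
    (Submodule.Quotient.mk (kMap L N X Y) : Gamma1 F L N)
      = - Submodule.Quotient.mk (kMap L N Y X) := by
  induction X with
  | zero => simp
  | add x y hx hy =>
    simp only [map_add, LinearMap.add_apply, Submodule.Quotient.mk_add, hx, hy, neg_add]
  | tmul a f =>
  induction Y with
  | zero => simp
  | add x y hx hy =>
    simp only [map_add, LinearMap.add_apply, Submodule.Quotient.mk_add, hx, hy, neg_add]
  | tmul b g => exact kMap_skew_tmul a f b g

lemma bMap_skew (R : LCAMod F L N) (X Y : A ⊗[F] (ℕ → N)) :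
    (Submodule.Quotient.mk (bMap R X Y) : Gamma1 F L N)
      = - Submodule.Quotient.mk (bMap R Y X) := by
  simp only [bMap_apply, Submodule.Quotient.mk_add, Submodule.Quotient.mk_sub]
  rw [kMap_skew X Y]
  abel

lemma bMap_jac (R : LCAMod F L N)
    (hact : ∀ (a : A) (m n : N) (p : ℕ),
      R.act a (m * n) p = R.act a m p * n + m * R.act a n p)
    (X Y Z : A ⊗[F] (ℕ → N)) :
    (Submodule.Quotient.mk (bMap R X (bMap R Y Z)) : Gamma1 F L N)
      = Submodule.Quotient.mk (bMap R (bMap R X Y) Z)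
        + Submodule.Quotient.mk (bMap R Y (bMap R X Z)) := by
  have e : bMap R X (bMap R Y Z) - bMap R (bMap R X Y) Z - bMap R Y (bMap R X Z)
      = kMap L N (cMap A (pMap R Z) X) Y + kMap L N Y (cMap A (pMap R Z) X) := by
    rw [bMap_apply R X, bMap_apply R (bMap R X Y), bMap_apply R Y (bMap R X Z)]
    simp only [pMap_bMap R hact]
    simp only [map_sub, LinearMap.sub_apply, cMap_mul]
    simp only [bMap_apply, map_add, map_sub, LinearMap.add_apply, LinearMap.sub_apply]
    rw [cMap_kMap _ (pMap_der R hact X), cMap_kMap _ (pMap_der R hact Y),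
      cMap_kMap _ (pMap_der R hact Z), ← kMap_jac X Y Z]
    abel
  have e2 := congrArg (fun t => (Submodule.Quotient.mk t : Gamma1 F L N)) e
  simp only [Submodule.Quotient.mk_sub, Submodule.Quotient.mk_add] at e2
  rw [kMap_skew Y, add_neg_cancel, sub_sub, sub_eq_zero] at e2
  exact e2

end Bracket

end LCC

open scoped TensorProduct in
open LCC in
/-- **Statement 11.** Let `A` be a Lie conformal algebra and `M` an `A`-module with a
commutative associative product on which `∂^M` and all `a_λ` act by derivations.
(a) The bracket
`[a⊗m(x), b⊗n(x)] = [a_{∂_{x₁}}b] ⊗ m(x₁)n(x)|_{x₁=x} − a ⊗ ⟨n(x₁), b_{λ₁} m(x)⟩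
+ b ⊗ ⟨m(x₁), a_{λ₁} n(x)⟩` on `A ⊗ M[[x]]` induces a well-defined Lie algebra
bracket on `𝔤 = ΠΓ̃₁(A,M) = (A ⊗ M[[x]])/(∂⊗1 + 1⊗∂_x)(A ⊗ M[[x]])`.
(b) The operator `∂(a⊗m(x)) = a⊗(∂^M − ∂_x)m(x)` is a derivation of this Lie
algebra, and `𝔤^∂ = ΠΓ₁(A,M) = Ker ∂` is a Lie subalgebra of `𝔤`. -/
theorem one_chains_lie_algebra
    {F : Type*} [Field F] [CharZero F]
    {A M : Type*} [AddCommGroup A] [Module F A] [CommRing M] [Algebra F M]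
    (L : LCA F A) (R : LCAMod F L M)
    (hD : ∀ m n : M, R.D (m * n) = R.D m * n + m * R.D n)
    (hact : ∀ (a : A) (m n : M) (p : ℕ),
      R.act a (m * n) p = R.act a m p * n + m * R.act a n p) :
    ∃ Br : Gamma1 F L M →ₗ[F] Gamma1 F L M →ₗ[F] Gamma1 F L M,
      -- the bracket is induced by the formula on generators
      (∀ (a : A) (m : ℕ → M) (b : A) (n : ℕ → M),
        Br (Submodule.Quotient.mk (a ⊗ₜ[F] m)) (Submodule.Quotient.mk (b ⊗ₜ[F] n))
          = Submodule.Quotient.mk (brkGen F R a m b n)) ∧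
      -- it is a Lie algebra bracket
      (∀ x, Br x x = 0) ∧
      (∀ x y z, Br x (Br y z) = Br (Br x y) z + Br y (Br x z)) ∧
      -- (b): ∂ descends to Γ̃₁, is a derivation of the bracket, and Ker ∂ = ΠΓ₁
      -- is a Lie subalgebra
      ∃ DQ : Gamma1 F L M →ₗ[F] Gamma1 F L M,
        (∀ t : A ⊗[F] (ℕ → M),
          DQ (Submodule.Quotient.mk t) = Submodule.Quotient.mk (chainPartial F R t)) ∧
        (∀ x y, DQ (Br x y) = Br (DQ x) y + Br x (DQ y)) ∧
        (∀ x y, DQ x = 0 → DQ y = 0 → DQ (Br x y) = 0) := by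
  have h1 : LinearMap.range (chainRel F L M)
      ≤ LinearMap.ker ((bMap R).compr₂ (LinearMap.range (chainRel F L M)).mkQ) := by
    rintro _ ⟨t, rfl⟩
    rw [LinearMap.mem_ker]
    refine LinearMap.ext fun Y => ?_
    rw [LinearMap.compr₂_apply, LinearMap.zero_apply, Submodule.mkQ_apply,
      Submodule.Quotient.mk_eq_zero]
    exact bMap_chainRel R t Y
  let B1 : Gamma1 F L M →ₗ[F] (A ⊗[F] (ℕ → M)) →ₗ[F] Gamma1 F L M :=
    Submodule.liftQ _ _ h1
  have hB1 : ∀ X Y, B1 (Submodule.Quotient.mk X) Y = Submodule.Quotient.mk (bMap R X Y) :=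
    fun X Y => rfl
  have h2 : LinearMap.range (chainRel F L M) ≤ LinearMap.ker B1.flip := by
    rintro _ ⟨t, rfl⟩
    rw [LinearMap.mem_ker]
    refine LinearMap.ext fun Y => ?_
    obtain ⟨Y, rfl⟩ := Submodule.Quotient.mk_surjective _ Y
    rw [LinearMap.flip_apply, hB1, bMap_skew, LinearMap.zero_apply, neg_eq_zero,
      Submodule.Quotient.mk_eq_zero]
    exact bMap_chainRel R t Y
  let Br : Gamma1 F L M →ₗ[F] Gamma1 F L M →ₗ[F] Gamma1 F L M :=
    (Submodule.liftQ _ B1.flip h2).flip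
  have hBr : ∀ X Y, Br (Submodule.Quotient.mk X) (Submodule.Quotient.mk Y)
      = Submodule.Quotient.mk (bMap R X Y) := fun X Y => rfl
  have h3 : LinearMap.range (chainRel F L M)
      ≤ LinearMap.ker ((LinearMap.range (chainRel F L M)).mkQ.comp (chainPartial F R)) := by
    rintro _ ⟨t, rfl⟩
    rw [LinearMap.mem_ker, LinearMap.comp_apply, chainPartial_chainRel, Submodule.mkQ_apply,
      Submodule.Quotient.mk_eq_zero]
    exact ⟨_, rfl⟩
  let DQ : Gamma1 F L M →ₗ[F] Gamma1 F L M := Submodule.liftQ _ _ h3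
  have hDQ : ∀ t, DQ (Submodule.Quotient.mk t) = Submodule.Quotient.mk (chainPartial F R t) :=
    fun t => rfl
  have hder : ∀ x y, DQ (Br x y) = Br (DQ x) y + Br x (DQ y) := by
    intro x y
    obtain ⟨X, rfl⟩ := Submodule.Quotient.mk_surjective _ x
    obtain ⟨Y, rfl⟩ := Submodule.Quotient.mk_surjective _ y
    rw [hBr, hDQ, hDQ, hDQ, hBr, hBr, chainPartial_bMap R hD, Submodule.Quotient.mk_add]
  refine ⟨Br, ?_, ?_, ?_, DQ, hDQ, hder, ?_⟩
  · intro a m b n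
    rw [hBr, bMap_tmul]
  · intro x
    obtain ⟨X, rfl⟩ := Submodule.Quotient.mk_surjective _ x
    rw [hBr]
    have h := bMap_skew R X X
    rw [eq_neg_iff_add_eq_zero, ← two_smul F] at h
    exact (smul_eq_zero.1 h).resolve_left two_ne_zero
  · intro x y z
    obtain ⟨X, rfl⟩ := Submodule.Quotient.mk_surjective _ x
    obtain ⟨Y, rfl⟩ := Submodule.Quotient.mk_surjective _ y
    obtain ⟨Z, rfl⟩ := Submodule.Quotient.mk_surjective _ z
    simp only [hBr]
    exact bMap_jac R hact X Y Z
  · intro x y hx hy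
    rw [hder, hx, hy]
    simp
end
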